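/- arXiv:1511.00136 — 2 statements merged into one kernel-verified Lean document; each statement's English description precedes it below -/
import Mathlib

section
/- There exists a map ϱ* from the disjoint union of the groups UVB_n (n ≥ 2) to the disjoint union of the groups UVP_m (m ≥ 1, with UVP_1 the trivial group) such that: (i) for every α ∈ UVB_n, ϱ*(α) ∈ UVP_m where m is the number of orbits of ι(α) on {1,…,n}, and α is fused Markov equivalent to ϱ*(α); (ii) for all unrestricted virtual braids α and β, α and β are fused Markov equivalent if and only if ϱ*(α) and ϱ*(β) lie in the same group UVP_m and there exists π ∈ S_m with s(π) ϱ*(α) s(π)^{−1} ϱ*(β)^{−1} ∈ [UVP_m, UVP_m]. -/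
/-!  Common setup: the unrestricted virtual braid group `UVB n`, its generators
σ_k, ρ_k (1-based indices), the elements λ_{i,j} and B_{i,j}, the permutation
homomorphism ι (characterized by `IsIota`), the section s : S_n → UVB n
(characterized by `IsPermSection`), and fused Markov equivalence. -/

/-- Generators of the unrestricted virtual braid group `UVB n`:
`Sum.inl i` is the classical generator σ_{i+1} and `Sum.inr i` is the virtual
generator ρ_{i+1}, for `i : Fin (n-1)` (so the 1-based indices are `1, …, n-1`). -/
abbrev UVBGen (n : ℕ) := Sum (Fin (n - 1)) (Fin (n - 1))

namespace UVBGen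
def sg {n : ℕ} (i : Fin (n - 1)) : FreeGroup (UVBGen n) := FreeGroup.of (Sum.inl i)
def rg {n : ℕ} (i : Fin (n - 1)) : FreeGroup (UVBGen n) := FreeGroup.of (Sum.inr i)
end UVBGen

open UVBGen in
/-- The defining relations of the unrestricted virtual braid group. -/
def uvbRels (n : ℕ) : Set (FreeGroup (UVBGen n)) :=
  {r | (∃ i j : Fin (n - 1), (j : ℕ) = (i : ℕ) + 1 ∧
          (r = sg i * sg j * sg i * (sg j * sg i * sg j)⁻¹ ∨
           r = rg i * rg j * rg i * (rg j * rg i * rg j)⁻¹ ∨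
           r = rg i * rg j * sg i * (sg j * rg i * rg j)⁻¹ ∨
           r = rg i * sg j * sg i * (sg j * sg i * rg j)⁻¹ ∨
           r = rg j * sg i * sg j * (sg i * sg j * rg i)⁻¹)) ∨
       (∃ i j : Fin (n - 1), ((i : ℕ) + 2 ≤ (j : ℕ) ∨ (j : ℕ) + 2 ≤ (i : ℕ)) ∧
          (r = sg i * sg j * (sg j * sg i)⁻¹ ∨
           r = rg i * rg j * (rg j * rg i)⁻¹ ∨
           r = sg i * rg j * (rg j * sg i)⁻¹)) ∨
       (∃ i : Fin (n - 1), r = rg i * rg i)}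

/-- The unrestricted virtual braid group on `n` strands. -/
abbrev UVB (n : ℕ) := PresentedGroup (uvbRels n)

namespace UVB

/-- The generator σ_k (1-based index; meaningful for `1 ≤ k ≤ n-1`, junk value `1` otherwise). -/
def sigma (n k : ℕ) : UVB n :=
  if h : 1 ≤ k ∧ k ≤ n - 1 then PresentedGroup.of (Sum.inl ⟨k - 1, by omega⟩) else 1

/-- The generator ρ_k (1-based index; meaningful for `1 ≤ k ≤ n-1`, junk value `1` otherwise). -/
def rho (n k : ℕ) : UVB n :=
  if h : 1 ≤ k ∧ k ≤ n - 1 then PresentedGroup.of (Sum.inr ⟨k - 1, by omega⟩) else 1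

/-- The element λ_{i,j} of `UVB n` (1-based indices `1 ≤ i ≠ j ≤ n`; junk value `1` if `i = j`).
For `i < j`:  `λ_{i,j} = ρ_{j-1}⋯ρ_{i+1} · ρ_i σ_i⁻¹ · ρ_{i+1}⋯ρ_{j-1}` and
`λ_{j,i} = ρ_{j-1}⋯ρ_{i+1} · σ_i⁻¹ ρ_i · ρ_{i+1}⋯ρ_{j-1}`. -/
def lam (n i j : ℕ) : UVB n :=
  if i < j then
    (((List.range' (i + 1) (j - 1 - i)).reverse.map (rho n)).prod) *
      (rho n i * (sigma n i)⁻¹) *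
      (((List.range' (i + 1) (j - 1 - i)).map (rho n)).prod)
  else if j < i then
    (((List.range' (j + 1) (i - 1 - j)).reverse.map (rho n)).prod) *
      ((sigma n j)⁻¹ * rho n j) *
      (((List.range' (j + 1) (i - 1 - j)).map (rho n)).prod)
  else 1

/-- The element `B_{i,j} = ρ_{j-1}ρ_{j-2}⋯ρ_{i+1}ρ_i` for `i < j`, and `1` otherwise. -/
def B (n i j : ℕ) : UVB n :=
  if i < j then ((List.range' i (j - i)).reverse.map (rho n)).prod else 1

/-- The subgroup `U_j` of `UVB n` generated by `{λ_{i,j}, λ_{j,i} : 1 ≤ i < j}`. -/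
def U (n j : ℕ) : Subgroup (UVB n) :=
  Subgroup.closure {x | ∃ i, 1 ≤ i ∧ i < j ∧ (x = lam n i j ∨ x = lam n j i)}

end UVB

/-- `ι : UVB n →* S_n` is the homomorphism sending σ_k and ρ_k to the
transposition (k, k+1) (written 0-based on `Fin n`). -/
def IsIota (n : ℕ) (ι : UVB n →* Equiv.Perm (Fin n)) : Prop :=
  ∀ (k : ℕ) (h1 : 1 ≤ k) (h2 : k ≤ n - 1),
    ι (UVB.sigma n k) = Equiv.swap ⟨k - 1, by omega⟩ ⟨k, by omega⟩ ∧
    ι (UVB.rho n k) = Equiv.swap ⟨k - 1, by omega⟩ ⟨k, by omega⟩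

/-- `s : S_n →* UVB n` is the homomorphism sending the transposition (k, k+1) to ρ_k. -/
def IsPermSection (n : ℕ) (s : Equiv.Perm (Fin n) →* UVB n) : Prop :=
  ∀ (k : ℕ) (h1 : 1 ≤ k) (h2 : k ≤ n - 1),
    s (Equiv.swap ⟨k - 1, by omega⟩ ⟨k, by omega⟩) = UVB.rho n k

/-- The number of orbits of a permutation of `Fin n`
(= number of fixed points + number of nontrivial cycles). -/
def numOrbits {n : ℕ} (π : Equiv.Perm (Fin n)) : ℕ :=
  (Finset.univ.filter fun x => π x = x).card + π.cycleType.card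

namespace UVB

private def embedGen (n : ℕ) : UVBGen n → UVBGen (n + 1)
  | Sum.inl i => Sum.inl ⟨i.val, by have := i.isLt; omega⟩
  | Sum.inr i => Sum.inr ⟨i.val, by have := i.isLt; omega⟩

open UVBGen in
/-- The natural inclusion `UVB n →* UVB (n+1)` (σ_k ↦ σ_k, ρ_k ↦ ρ_k). -/
def incl (n : ℕ) : UVB n →* UVB (n + 1) :=
  PresentedGroup.toGroup (f := fun x => PresentedGroup.of (embedGen n x)) (by
    have key : (FreeGroup.lift fun x => (PresentedGroup.of (embedGen n x) : UVB (n + 1)))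
        = (PresentedGroup.mk (uvbRels (n + 1))).comp (FreeGroup.map (embedGen n)) := by
      ext x
      simp [PresentedGroup.of]
    intro r hr
    rw [key]
    simp only [MonoidHom.comp_apply]
    have hmem : FreeGroup.map (embedGen n) r ∈ uvbRels (n + 1) := by
      have hsg : ∀ i : Fin (n - 1), FreeGroup.map (embedGen n) (sg i)
          = sg (⟨i.val, by have := i.isLt; omega⟩ : Fin (n + 1 - 1)) := by
        intro i; simp [sg, embedGen]
      have hrg : ∀ i : Fin (n - 1), FreeGroup.map (embedGen n) (rg i)
          = rg (⟨i.val, by have := i.isLt; omega⟩ : Fin (n + 1 - 1)) := by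
        intro i; simp [rg, embedGen]
      rcases hr with ⟨i, j, hij, hc⟩ | ⟨i, j, hij, hc⟩ | ⟨i, hc⟩
      · refine Or.inl ⟨⟨i.val, by have := i.isLt; omega⟩, ⟨j.val, by have := j.isLt; omega⟩,
          by simpa using hij, ?_⟩
        rcases hc with h | h | h | h | h <;> subst h <;>
          simp only [map_mul, map_inv, hsg, hrg] <;> tauto
      · refine Or.inr (Or.inl ⟨⟨i.val, by have := i.isLt; omega⟩, ⟨j.val, by have := j.isLt; omega⟩,
          by simpa using hij, ?_⟩)
        rcases hc with h | h | h <;> subst h <;>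
          simp only [map_mul, map_inv, hsg, hrg] <;> tauto
      · refine Or.inr (Or.inr ⟨⟨i.val, by have := i.isLt; omega⟩, ?_⟩)
        subst hc
        simp only [map_mul, hsg, hrg]
    exact (QuotientGroup.eq_one_iff _).mpr (Subgroup.subset_normalClosure hmem))

end UVB

/-- The elementary fused Markov moves on the disjoint union of the groups `UVB n`:
conjugation, and the three right stabilizations (positive, negative, virtual). -/
inductive MarkovBase : (Σ n, UVB n) → (Σ n, UVB n) → Prop
  | conj (n : ℕ) (α γ : UVB n) : MarkovBase ⟨n, α⟩ ⟨n, γ * α * γ⁻¹⟩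
  | stabPos (n : ℕ) (α : UVB n) :
      MarkovBase ⟨n, α⟩ ⟨n + 1, UVB.incl n α * UVB.sigma (n + 1) n⟩
  | stabNeg (n : ℕ) (α : UVB n) :
      MarkovBase ⟨n, α⟩ ⟨n + 1, UVB.incl n α * (UVB.sigma (n + 1) n)⁻¹⟩
  | stabVirt (n : ℕ) (α : UVB n) :
      MarkovBase ⟨n, α⟩ ⟨n + 1, UVB.incl n α * UVB.rho (n + 1) n⟩

/-- Fused Markov equivalence: the smallest equivalence relation generated by the
elementary Markov moves.  By Kamada's theorem, two unrestricted virtual braids are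
fused Markov equivalent iff their closures are equivalent fused links. -/
def Markov : (Σ n, UVB n) → (Σ n, UVB n) → Prop := Relation.EqvGen MarkovBase

/-! ## Statement 11 -/


/-! ## Part 1: basic relations -/

namespace UVBX

open Equiv

theorem sigma_def {n k : ℕ} (h : k + 1 < n) :
    UVB.sigma n (k + 1) = PresentedGroup.of (Sum.inl ⟨k, by omega⟩) := by
  unfold UVB.sigma
  rw [dif_pos (by omega)]
  rfl

theorem rho_def {n k : ℕ} (h : k + 1 < n) :
    UVB.rho n (k + 1) = PresentedGroup.of (Sum.inr ⟨k, by omega⟩) := by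
  unfold UVB.rho
  rw [dif_pos (by omega)]
  rfl

theorem mk_sg {n : ℕ} (i : Fin (n - 1)) :
    PresentedGroup.mk (uvbRels n) (UVBGen.sg i) = UVB.sigma n (i.1 + 1) := by
  rw [sigma_def (by omega)]; rfl

theorem mk_rg {n : ℕ} (i : Fin (n - 1)) :
    PresentedGroup.mk (uvbRels n) (UVBGen.rg i) = UVB.rho n (i.1 + 1) := by
  rw [rho_def (by omega)]; rfl

theorem rel_near {n k : ℕ} (h : k + 2 < n) :
    let S := UVB.sigma n
    let R := UVB.rho n
    (S (k+1) * S (k+2) * S (k+1) = S (k+2) * S (k+1) * S (k+2)) ∧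
    (R (k+1) * R (k+2) * R (k+1) = R (k+2) * R (k+1) * R (k+2)) ∧
    (R (k+1) * R (k+2) * S (k+1) = S (k+2) * R (k+1) * R (k+2)) ∧
    (R (k+1) * S (k+2) * S (k+1) = S (k+2) * S (k+1) * R (k+2)) ∧
    (R (k+2) * S (k+1) * S (k+2) = S (k+1) * S (k+2) * R (k+1)) := by
  intro S R
  have key : ∀ x y : FreeGroup (UVBGen n), x * y⁻¹ ∈ uvbRels n →
      PresentedGroup.mk (uvbRels n) x = PresentedGroup.mk (uvbRels n) y :=
    fun x y hxy => PresentedGroup.mk_eq_mk_of_mul_inv_mem hxy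
  let i : Fin (n - 1) := ⟨k, by omega⟩
  let j : Fin (n - 1) := ⟨k + 1, by omega⟩
  have hS1 : PresentedGroup.mk (uvbRels n) (UVBGen.sg i) = S (k+1) := mk_sg i
  have hS2 : PresentedGroup.mk (uvbRels n) (UVBGen.sg j) = S (k+2) := mk_sg j
  have hR1 : PresentedGroup.mk (uvbRels n) (UVBGen.rg i) = R (k+1) := mk_rg i
  have hR2 : PresentedGroup.mk (uvbRels n) (UVBGen.rg j) = R (k+2) := mk_rg j
  simp only [← hS1, ← hS2, ← hR1, ← hR2, ← map_mul]
  refine ⟨?_, ?_, ?_, ?_, ?_⟩ <;> apply key <;> refine Or.inl ⟨i, j, rfl, ?_⟩ <;> tauto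

theorem rel_far {n k l : ℕ} (hk : k + 1 < n) (hl : l + 1 < n) (h : k + 2 ≤ l ∨ l + 2 ≤ k) :
    let S := UVB.sigma n
    let R := UVB.rho n
    (S (k+1) * S (l+1) = S (l+1) * S (k+1)) ∧
    (R (k+1) * R (l+1) = R (l+1) * R (k+1)) ∧
    (S (k+1) * R (l+1) = R (l+1) * S (k+1)) := by
  intro S R
  have key : ∀ x y : FreeGroup (UVBGen n), x * y⁻¹ ∈ uvbRels n →
      PresentedGroup.mk (uvbRels n) x = PresentedGroup.mk (uvbRels n) y :=
    fun x y hxy => PresentedGroup.mk_eq_mk_of_mul_inv_mem hxy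
  let i : Fin (n - 1) := ⟨k, by omega⟩
  let j : Fin (n - 1) := ⟨l, by omega⟩
  have hS1 : PresentedGroup.mk (uvbRels n) (UVBGen.sg i) = S (k+1) := mk_sg i
  have hS2 : PresentedGroup.mk (uvbRels n) (UVBGen.sg j) = S (l+1) := mk_sg j
  have hR1 : PresentedGroup.mk (uvbRels n) (UVBGen.rg i) = R (k+1) := mk_rg i
  have hR2 : PresentedGroup.mk (uvbRels n) (UVBGen.rg j) = R (l+1) := mk_rg j
  simp only [← hS1, ← hS2, ← hR1, ← hR2, ← map_mul]
  refine ⟨?_, ?_, ?_⟩ <;> apply key <;> refine Or.inr (Or.inl ⟨i, j, h, ?_⟩) <;> tauto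

theorem rho_sq {n k : ℕ} (hk : k + 1 < n) : UVB.rho n (k+1) * UVB.rho n (k+1) = 1 := by
  let i : Fin (n - 1) := ⟨k, by omega⟩
  have hR1 : PresentedGroup.mk (uvbRels n) (UVBGen.rg i) = UVB.rho n (k+1) := mk_rg i
  rw [← hR1, ← map_mul]
  exact PresentedGroup.one_of_mem (Or.inr (Or.inr ⟨i, rfl⟩))

theorem rho_inv {n k : ℕ} (hk : k + 1 < n) : (UVB.rho n (k+1))⁻¹ = UVB.rho n (k+1) :=
  inv_eq_of_mul_eq_one_left (rho_sq hk)

/-- `UVB n` is generated by the σ's and ρ's. -/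
theorem generated {n : ℕ} (H : Subgroup (UVB n))
    (hS : ∀ k, k + 1 < n → UVB.sigma n (k+1) ∈ H)
    (hR : ∀ k, k + 1 < n → UVB.rho n (k+1) ∈ H) (x : UVB n) : x ∈ H := by
  refine PresentedGroup.generated_by _ H ?_ x
  rintro (i | i)
  · have := hS i.1 (by omega)
    rwa [sigma_def (by omega)] at this
  · have := hR i.1 (by omega)
    rwa [rho_def (by omega)] at this

theorem hom_ext {n : ℕ} {G : Type*} [Group G] {f g : UVB n →* G}
    (hS : ∀ k, k + 1 < n → f (UVB.sigma n (k+1)) = g (UVB.sigma n (k+1)))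
    (hR : ∀ k, k + 1 < n → f (UVB.rho n (k+1)) = g (UVB.rho n (k+1))) : f = g := by
  exact MonoidHom.ext fun x => generated (f.eqLocus g) hS hR x

theorem incl_sigma {n k : ℕ} (h : k + 1 < n) :
    UVB.incl n (UVB.sigma n (k+1)) = UVB.sigma (n+1) (k+1) := by
  rw [sigma_def h, sigma_def (by omega)]
  exact PresentedGroup.toGroup.of _

theorem incl_rho {n k : ℕ} (h : k + 1 < n) :
    UVB.incl n (UVB.rho n (k+1)) = UVB.rho (n+1) (k+1) := by
  rw [rho_def h, rho_def (by omega)]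
  exact PresentedGroup.toGroup.of _

/-- Elements of `UVB n` commute with σ and ρ on two extra strands. -/
theorem incl2_comm {n : ℕ} (x : UVB n) :
    Commute (UVB.incl (n+1) (UVB.incl n x)) (UVB.sigma (n+2) (n+1)) ∧
    Commute (UVB.incl (n+1) (UVB.incl n x)) (UVB.rho (n+2) (n+1)) := by
  let f := (UVB.incl (n+1)).comp (UVB.incl n)
  have h := generated (n := n)
    ((Subgroup.centralizer {UVB.sigma (n+2) (n+1), UVB.rho (n+2) (n+1)}).comap f) ?_ ?_ x
  · rw [Subgroup.mem_comap, Subgroup.mem_centralizer_iff] at h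
    exact ⟨(h _ (by simp)).symm, (h _ (by simp)).symm⟩
  · intro k hk
    rw [Subgroup.mem_comap, Subgroup.mem_centralizer_iff]
    have e : f (UVB.sigma n (k+1)) = UVB.sigma (n+2) (k+1) := by
      simp only [f, MonoidHom.comp_apply]
      rw [incl_sigma hk, incl_sigma (by omega)]
    obtain ⟨h1, h2, h3⟩ := rel_far (n := n+2) (k := k) (l := n) (by omega) (by omega) (by omega)
    intro y hy
    rcases hy with rfl | rfl
    · rw [e, h1]
    · rw [e, h3]
  · intro k hk
    rw [Subgroup.mem_comap, Subgroup.mem_centralizer_iff]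
    have e : f (UVB.rho n (k+1)) = UVB.rho (n+2) (k+1) := by
      simp only [f, MonoidHom.comp_apply]
      rw [incl_rho hk, incl_rho (by omega)]
    obtain ⟨h1, h2, h3⟩ := rel_far (n := n+2) (k := n) (l := k) (by omega) (by omega) (by omega)
    intro y hy
    rcases hy with rfl | rfl
    · rw [e, h3]
    · rw [e, h2]

/-! ### Permutations -/

/-- Families of homomorphisms `S_n → UVB n`. -/
abbrev SecFam := ∀ n, Perm (Fin n) →* UVB n

/-- The family is the family of standard sections. -/
def IsSec (s : SecFam) : Prop := ∀ n, IsPermSection n (s n)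

/-- The adjacent transposition `(k, k+1)` (0-based). -/
def adj (n k : ℕ) (h : k + 1 < n) : Perm (Fin n) := swap ⟨k, by omega⟩ ⟨k+1, h⟩

theorem perm_generated {n : ℕ} (H : Subgroup (Perm (Fin n)))
    (h : ∀ k (hk : k + 1 < n), adj n k hk ∈ H) (g : Perm (Fin n)) : g ∈ H := by
  cases n with
  | zero => rw [Subsingleton.elim g 1]; exact H.one_mem
  | succ n =>
    have : (⊤ : Submonoid (Perm (Fin (n+1)))) ≤ H.toSubmonoid := by
      rw [← Equiv.Perm.mclosure_swap_castSucc_succ, Submonoid.closure_le]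
      rintro _ ⟨i, rfl⟩
      exact h i.1 (by omega)
    exact this (Submonoid.mem_top g)

/-- Extend a permutation of `Fin n` to `Fin (n+1)` fixing the last point. -/
def emb (n : ℕ) : Perm (Fin n) →* Perm (Fin (n+1)) where
  toFun g :=
    { toFun := Fin.lastCases (Fin.last n) (fun i => (g i).castSucc)
      invFun := Fin.lastCases (Fin.last n) (fun i => (g.symm i).castSucc)
      left_inv := by intro x; cases x using Fin.lastCases <;> simp
      right_inv := by intro x; cases x using Fin.lastCases <;> simp }
  map_one' := by ext x; cases x using Fin.lastCases <;> simp
  map_mul' g h := by ext x; cases x using Fin.lastCases <;> simp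

@[simp] theorem emb_castSucc {n : ℕ} (g : Perm (Fin n)) (i : Fin n) :
    emb n g i.castSucc = (g i).castSucc := by simp [emb]

@[simp] theorem emb_last {n : ℕ} (g : Perm (Fin n)) :
    emb n g (Fin.last n) = Fin.last n := by simp [emb]

theorem emb_swap {n : ℕ} (i j : Fin n) :
    emb n (swap i j) = swap i.castSucc j.castSucc := by
  ext x
  cases x using Fin.lastCases with
  | last =>
    rw [emb_last, swap_apply_of_ne_of_ne (Fin.castSucc_lt_last _).ne' (Fin.castSucc_lt_last _).ne']
  | cast x =>
    rw [emb_castSucc, swap_apply_def, swap_apply_def]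
    simp only [Fin.castSucc_inj]
    split_ifs <;> rfl

theorem exists_emb {n : ℕ} (h : Perm (Fin (n+1))) (hl : h (Fin.last n) = Fin.last n) :
    ∃ g, h = emb n g := by
  have hne : ∀ i : Fin n, h i.castSucc ≠ Fin.last n := by
    intro i hi
    rw [← hl] at hi
    exact (Fin.castSucc_lt_last i).ne (h.injective hi)
  have hl' : h.symm (Fin.last n) = Fin.last n := by rw [Equiv.symm_apply_eq, hl]
  have hne' : ∀ i : Fin n, h.symm i.castSucc ≠ Fin.last n := by
    intro i hi
    rw [← hl'] at hi
    exact (Fin.castSucc_lt_last i).ne (h.symm.injective hi)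
  refine ⟨⟨fun i => (h i.castSucc).castPred (hne i), fun i => (h.symm i.castSucc).castPred (hne' i),
    fun i => by simp, fun i => by simp⟩, ?_⟩
  ext x
  cases x using Fin.lastCases <;> simp [emb, hl]

theorem exists_perm2 {α : Type*} [DecidableEq α] {a b i j : α} (hab : a ≠ b) (hij : i ≠ j) :
    ∃ g : Perm α, g a = i ∧ g b = j := by
  refine ⟨swap (swap a i b) j * swap a i, ?_, by simp⟩
  have h1 : i ≠ swap a i b := by
    intro h
    have : swap a i a = swap a i b := by rw [swap_apply_left]; exact h
    exact hab ((swap a i).injective this)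
  simp only [Perm.coe_mul, Function.comp_apply, swap_apply_left]
  exact swap_apply_of_ne_of_ne h1 hij

theorem exists_perm3 {α : Type*} [DecidableEq α] {a b c i j k : α} (hab : a ≠ b) (hac : a ≠ c)
    (hbc : b ≠ c) (hij : i ≠ j) (hik : i ≠ k) (hjk : j ≠ k) :
    ∃ g : Perm α, g a = i ∧ g b = j ∧ g c = k := by
  obtain ⟨g, h1, h2⟩ := exists_perm2 hab hij
  refine ⟨swap (g c) k * g, ?_, ?_, by simp⟩
  · simp only [Perm.coe_mul, Function.comp_apply, h1]
    refine swap_apply_of_ne_of_ne ?_ hik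
    rw [← h1]; exact fun h => hac (g.injective h)
  · simp only [Perm.coe_mul, Function.comp_apply, h2]
    refine swap_apply_of_ne_of_ne ?_ hjk
    rw [← h2]; exact fun h => hbc (g.injective h)

end UVBX

/-! ## Part 2: the pure generators -/

namespace UVBX

open Equiv

theorem s_adj {s : SecFam} (hs : IsSec s)
    {n k : ℕ} (h : k + 1 < n) : s n (adj n k h) = UVB.rho n (k+1) :=
  hs n (k+1) (by omega) (by omega)

theorem incl_s {s : SecFam} (hs : IsSec s)
    {n : ℕ} (g : Perm (Fin n)) : UVB.incl n (s n g) = s (n+1) (emb n g) := by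
  refine perm_generated (((UVB.incl n).comp (s n)).eqLocus ((s (n+1)).comp (emb n))) ?_ g
  intro k hk
  change UVB.incl n (s n (adj n k hk)) = s (n+1) (emb n (adj n k hk))
  rw [s_adj hs, incl_rho hk, ← s_adj hs (by omega : k + 1 < n + 1)]
  unfold adj
  rw [emb_swap]
  rfl

/-- `ρ_{k+1} σ_{k+1}⁻¹`. -/
def bs (n k : ℕ) : UVB n := UVB.rho n (k+1) * (UVB.sigma n (k+1))⁻¹

theorem incl_bs {n k : ℕ} (h : k + 1 < n) : UVB.incl n (bs n k) = bs (n+1) k := by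
  unfold bs
  rw [map_mul, map_inv, incl_rho h, incl_sigma h]

theorem bs_comm_incl2 {n : ℕ} (x : UVB n) :
    Commute (UVB.incl (n+1) (UVB.incl n x)) (bs (n+2) n) := by
  obtain ⟨h1, h2⟩ := incl2_comm x
  exact h2.mul_right h1.inv_right

theorem bs_stab {s : SecFam} (hs : IsSec s)
    {m : ℕ} (h : Perm (Fin (m+2))) (h1 : h (Fin.last m).castSucc = (Fin.last m).castSucc)
    (h2 : h (Fin.last (m+1)) = Fin.last (m+1)) : Commute (s (m+2) h) (bs (m+2) m) := by
  obtain ⟨g, rfl⟩ := exists_emb h h2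
  rw [emb_castSucc, Fin.castSucc_inj] at h1
  obtain ⟨g, rfl⟩ := exists_emb g h1
  rw [← incl_s hs, ← incl_s hs]
  exact bs_comm_incl2 _

theorem last_ne (m : ℕ) : (Fin.last m).castSucc ≠ Fin.last (m+1) := (Fin.castSucc_lt_last _).ne

open Classical in
/-- The pure generator λ_{i,j} (0-based indices). -/
noncomputable def Lam (s : SecFam) : (n : ℕ) → Fin n → Fin n → UVB n
  | 0, _, _ => 1
  | 1, _, _ => 1
  | (m+2), i, j =>
    if h : i ≠ j then
      s (m+2) (exists_perm2 (last_ne m) h).choose * bs (m+2) m *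
        (s (m+2) (exists_perm2 (last_ne m) h).choose)⁻¹
    else 1

theorem bs_shift {s : SecFam} (hs : IsSec s)
    {n k : ℕ} (h : k + 2 < n) :
    s n (adj n k (by omega) * adj n (k+1) h) * bs n k *
      (s n (adj n k (by omega) * adj n (k+1) h))⁻¹ = bs n (k+1) := by
  rw [map_mul, s_adj hs, s_adj hs]
  obtain ⟨-, h2, h3, -, -⟩ := rel_near h
  rw [mul_inv_eq_iff_eq_mul]
  unfold bs
  have e : UVB.rho n (k+1) * UVB.rho n (k+2) * (UVB.sigma n (k+1))⁻¹ =
      (UVB.sigma n (k+2))⁻¹ * (UVB.rho n (k+1) * UVB.rho n (k+2)) := by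
    rw [mul_inv_eq_iff_eq_mul, mul_assoc, h3]
    group
  calc _ = (UVB.rho n (k+1) * UVB.rho n (k+2) * UVB.rho n (k+1)) * (UVB.sigma n (k+1))⁻¹ := by
        group
    _ = UVB.rho n (k+2) * (UVB.rho n (k+1) * UVB.rho n (k+2) * (UVB.sigma n (k+1))⁻¹) := by
        rw [h2]; group
    _ = _ := by rw [e]; group


theorem Lam_key_top {s : SecFam} (hs : IsSec s) {m : ℕ} (g : Perm (Fin (m+2))) :
    s (m+2) g * bs (m+2) m * (s (m+2) g)⁻¹ =
      Lam s (m+2) (g (Fin.last m).castSucc) (g (Fin.last (m+1))) := by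
  have hne : g (Fin.last m).castSucc ≠ g (Fin.last (m+1)) := fun h => last_ne m (g.injective h)
  refine Eq.trans ?_ (dif_pos hne).symm
  obtain ⟨e1, e2⟩ := (exists_perm2 (last_ne m) hne).choose_spec
  set g' := (exists_perm2 (last_ne m) hne).choose
  have hc := bs_stab hs (g'⁻¹ * g) (by
      rw [Perm.mul_apply, ← e1, Perm.inv_eq_iff_eq])
    (by rw [Perm.mul_apply, ← e2, Perm.inv_eq_iff_eq])
  rw [map_mul, map_inv] at hc
  have := hc.eq
  rw [mul_inv_eq_iff_eq_mul]
  calc _ = s (m+2) g' * ((s (m+2) g')⁻¹ * s (m+2) g * bs (m+2) m) := by group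
    _ = _ := by rw [this]; group

theorem Lam_key {s : SecFam} (hs : IsSec s) {n k : ℕ} (h : k + 1 < n) (g : Perm (Fin n)) :
    s n g * bs n k * (s n g)⁻¹ = Lam s n (g ⟨k, by omega⟩) (g ⟨k+1, h⟩) := by
  obtain ⟨m, rfl⟩ : ∃ m, n = m + 2 := ⟨n - 2, by omega⟩
  obtain ⟨d, hd⟩ : ∃ d, k + d = m := ⟨m - k, by omega⟩
  induction d generalizing k g with
  | zero =>
    obtain rfl : k = m := by omega
    exact Lam_key_top hs g
  | succ d ih =>
    have h' : k + 2 < m + 2 := by omega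
    set t := adj (m+2) k (by omega) * adj (m+2) (k+1) h' with ht
    have e := ih (k := k+1) h' (g * t⁻¹) (by omega)
    have t1 : t⁻¹ ⟨k+1, by omega⟩ = ⟨k, by omega⟩ := by
      rw [Perm.inv_eq_iff_eq, ht, Perm.mul_apply, adj, adj, swap_apply_of_ne_of_ne (x := (⟨k, by omega⟩ : Fin (m+2))),
        swap_apply_left]
      · simp
      · simp [Fin.ext_iff]
        omega
    have t2 : t⁻¹ ⟨k+1+1, by omega⟩ = ⟨k+1, by omega⟩ := by
      rw [Perm.inv_eq_iff_eq, ht, Perm.mul_apply, adj, adj, swap_apply_left,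
        swap_apply_of_ne_of_ne]
      · simp [Fin.ext_iff]
        omega
      · simp
    rw [Perm.mul_apply, Perm.mul_apply, t1, t2] at e
    rw [← e, ← bs_shift hs h', map_mul, map_inv, ← ht]
    group

theorem exists_Lam {s : SecFam} (hs : IsSec s) {n : ℕ} {i j : Fin n} (h : i ≠ j) :
    ∃ (m : ℕ) (e : m + 1 < n) (g : Perm (Fin n)), g ⟨m, by omega⟩ = i ∧ g ⟨m+1, e⟩ = j ∧
      Lam s n i j = s n g * bs n m * (s n g)⁻¹ := by
  have hn : 0 + 1 < n := by
    have := i.2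
    have := j.2
    have : i.1 ≠ j.1 := fun h' => h (Fin.ext h')
    omega
  obtain ⟨g, h1, h2⟩ := exists_perm2 (a := (⟨0, by omega⟩ : Fin n)) (b := ⟨0+1, hn⟩)
    (by simp) h
  refine ⟨0, hn, g, h1, h2, ?_⟩
  rw [Lam_key hs hn, h1, h2]

theorem Lam_self {s : SecFam} (_hs : IsSec s) (n : ℕ) (i : Fin n) : Lam s n i i = 1 := by
  match n, i with
  | 0, i => rfl
  | 1, i => rfl
  | m+2, i => simp [Lam]

theorem Lam_conj {s : SecFam} (hs : IsSec s) {n : ℕ} (g : Perm (Fin n)) (i j : Fin n) :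
    s n g * Lam s n i j * (s n g)⁻¹ = Lam s n (g i) (g j) := by
  by_cases h : i = j
  · subst h
    rw [Lam_self hs, Lam_self hs]; group
  · obtain ⟨m, e, g', h1, h2, h3⟩ := exists_Lam hs h
    rw [h3, ← h1, ← h2, ← Perm.mul_apply, ← Perm.mul_apply, ← Lam_key hs e, map_mul]
    group

theorem incl_Lam {s : SecFam} (hs : IsSec s) {n : ℕ} (i j : Fin n) :
    UVB.incl n (Lam s n i j) = Lam s (n+1) i.castSucc j.castSucc := by
  by_cases h : i = j
  · subst h
    rw [Lam_self hs, Lam_self hs, map_one]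
  · obtain ⟨m, e, g', h1, h2, h3⟩ := exists_Lam hs h
    rw [h3, map_mul, map_mul, map_inv, incl_s hs, incl_bs e, Lam_key hs (by omega), ← h1, ← h2,
      ← emb_castSucc, ← emb_castSucc]
    rfl

theorem Lam_adj {s : SecFam} (hs : IsSec s) {n k : ℕ} (h : k + 1 < n) :
    Lam s n ⟨k, by omega⟩ ⟨k+1, h⟩ = UVB.rho n (k+1) * (UVB.sigma n (k+1))⁻¹ := by
  have := Lam_key hs h 1
  simpa [bs] using this.symm

theorem Lam_adj' {s : SecFam} (hs : IsSec s) {n k : ℕ} (h : k + 1 < n) :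
    Lam s n ⟨k+1, h⟩ ⟨k, by omega⟩ = (UVB.sigma n (k+1))⁻¹ * UVB.rho n (k+1) := by
  have := Lam_key hs h (adj n k h)
  rw [s_adj hs, rho_inv h] at this
  simp only [adj, swap_apply_left, swap_apply_right] at this
  rw [← this, bs, ← mul_assoc, rho_sq h, one_mul]

/-! ### Commutation relations -/

theorem comm_base {s : SecFam} (hs : IsSec s) {n : ℕ} (h : 2 < n) :
    let l := Lam s n
    let a : Fin n := ⟨0, by omega⟩
    let b : Fin n := ⟨1, by omega⟩
    let c : Fin n := ⟨2, by omega⟩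
    l a c * l b c = l b c * l a c ∧ l a b * l a c = l a c * l a b ∧
      l a b * l b c = l b c * l a b := by
  intro l a b c
  obtain ⟨h1, h2, h3, h4, h5⟩ := rel_near (n := n) (k := 0) (by omega)
  have hr1 := s_adj hs (n := n) (k := 0) (by omega)
  have hr2 := s_adj hs (n := n) (k := 1) (by omega)
  have l1 := Lam_adj hs (n := n) (k := 0) (by omega)
  have l2 := Lam_adj hs (n := n) (k := 1) (by omega)
  have i1 := rho_inv (n := n) (k := 0) (by omega)
  have i2 := rho_inv (n := n) (k := 1) (by omega)
  simp only [zero_add, one_add_one_eq_two] at *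
  set r1 := UVB.rho n 1
  set r2 := UVB.rho n 2
  set s1 := UVB.sigma n 1
  set s2 := UVB.sigma n 2
  have l1' : l a b = r1 * s1⁻¹ := l1
  have l2' : l b c = r2 * s2⁻¹ := l2
  have l3 : l a c = r1 * (l b c) * r1⁻¹ := by
    have := Lam_conj hs (adj n 0 (by omega)) b c
    rw [hr1] at this
    rw [this]
    have e1 : adj n 0 (by omega) b = a := by simp [adj, a, b]
    have e2 : adj n 0 (by omega) c = c := by
      unfold adj; apply swap_apply_of_ne_of_ne <;> simp [c]
    rw [e1, e2]
  have l4 : l a c = r2 * (l a b) * r2⁻¹ := by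
    have := Lam_conj hs (adj n 1 (by omega)) a b
    rw [hr2] at this
    rw [this]
    have e1 : adj n 1 (by omega) b = c := by simp [adj, c, b]
    have e2 : adj n 1 (by omega) a = a := by
      unfold adj; apply swap_apply_of_ne_of_ne <;> simp [a]
    rw [e1, e2]
  have hab : r1 * r2 * l a b = l b c * (r1 * r2) := by
    have := Lam_conj hs (adj n 0 (by omega) * adj n 1 (by omega)) a b
    rw [map_mul, hr1, hr2, mul_inv_eq_iff_eq_mul] at this
    rw [this]
    have e2 : adj n 1 (by omega) a = a := by
      unfold adj; apply swap_apply_of_ne_of_ne <;> simp [a]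
    have e1 : adj n 1 (by omega) b = c := by simp [adj, c, b]
    have e3 : adj n 0 (by omega) a = b := by simp [adj, a, b]
    have e4 : adj n 0 (by omega) c = c := by
      unfold adj; apply swap_apply_of_ne_of_ne <;> simp [c]
    rw [Perm.mul_apply, Perm.mul_apply, e1, e2, e3, e4]
  generalize l a b = x at *
  generalize l b c = y at *
  generalize l a c = z at *
  have q1 : s1 = x⁻¹ * r1 := by rw [l1']; simp
  have q2 : s2 = y⁻¹ * r2 := by rw [l2']; simp
  have q3 : r1 * y⁻¹ = z⁻¹ * r1 := by rw [l3]; group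
  have q4 : r2 * x⁻¹ = z⁻¹ * r2 := by rw [l4]; group
  have q5 : r1 * r2 * x⁻¹ = y⁻¹ * (r1 * r2) := by
    rw [mul_inv_eq_iff_eq_mul, mul_assoc, hab]; group
  have q6 : r2 * r1 * y⁻¹ = x⁻¹ * (r2 * r1) := by
    have : r2 * r1 = (r1 * r2)⁻¹ := by rw [mul_inv_rev, i1, i2]
    rw [this, inv_mul_eq_iff_eq_mul, ← mul_assoc, eq_mul_inv_iff_mul_eq, q5]
  have c1 : z⁻¹ * y⁻¹ = y⁻¹ * z⁻¹ := by
    have e1 : r1 * s2 * s1 = z⁻¹ * y⁻¹ * (r1 * r2 * r1) := by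
      rw [q1, q2]
      calc _ = (r1 * y⁻¹) * r2 * x⁻¹ * r1 := by group
        _ = z⁻¹ * (r1 * r2 * x⁻¹) * r1 := by rw [q3]; group
        _ = _ := by rw [q5]; group
    have e2 : s2 * s1 * r2 = y⁻¹ * z⁻¹ * (r1 * r2 * r1) := by
      rw [q1, q2, h2]
      calc _ = y⁻¹ * (r2 * x⁻¹) * r1 * r2 := by group
        _ = _ := by rw [q4]; group
    rw [e1, e2] at h4
    exact mul_right_cancel h4
  have c2 : z⁻¹ * x⁻¹ = x⁻¹ * z⁻¹ := by
    have e1 : r2 * s1 * s2 = z⁻¹ * x⁻¹ * (r1 * r2 * r1) := by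
      rw [q1, q2, h2]
      calc _ = (r2 * x⁻¹) * r1 * y⁻¹ * r2 := by group
        _ = z⁻¹ * (r2 * r1 * y⁻¹) * r2 := by rw [q4]; group
        _ = _ := by rw [q6]; group
    have e2 : s1 * s2 * r1 = x⁻¹ * z⁻¹ * (r1 * r2 * r1) := by
      rw [q1, q2]
      calc _ = x⁻¹ * (r1 * y⁻¹) * r2 * r1 := by group
        _ = _ := by rw [q3]; group
    rw [e1, e2] at h5
    exact mul_right_cancel h5
  have c3 : x⁻¹ * z⁻¹ * y⁻¹ = y⁻¹ * z⁻¹ * x⁻¹ := by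
    have e1 : s1 * s2 * s1 = x⁻¹ * z⁻¹ * y⁻¹ * (r1 * r2 * r1) := by
      rw [q1, q2]
      calc _ = x⁻¹ * (r1 * y⁻¹) * r2 * x⁻¹ * r1 := by group
        _ = x⁻¹ * z⁻¹ * (r1 * r2 * x⁻¹) * r1 := by rw [q3]; group
        _ = _ := by rw [q5]; group
    have e2 : s2 * s1 * s2 = y⁻¹ * z⁻¹ * x⁻¹ * (r1 * r2 * r1) := by
      rw [q1, q2, h2]
      calc _ = y⁻¹ * (r2 * x⁻¹) * r1 * y⁻¹ * r2 := by group
        _ = y⁻¹ * z⁻¹ * (r2 * r1 * y⁻¹) * r2 := by rw [q4]; group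
        _ = _ := by rw [q6]; group
    rw [e1, e2] at h1
    exact mul_right_cancel h1
  have d1 : Commute z y := Commute.inv_inv_iff.mp c1
  have d2 : Commute z x := Commute.inv_inv_iff.mp c2
  refine ⟨d1, d2.symm, ?_⟩
  have c4 : y⁻¹ * x⁻¹ = x⁻¹ * y⁻¹ := by
    rw [← c2, mul_assoc, mul_assoc, ← mul_assoc y⁻¹, ← c1, mul_assoc] at c3
    exact (mul_left_cancel c3).symm
  exact (Commute.inv_inv_iff.mp c4).symm

/-- Pure generators with exactly one common index, or disjoint indices, commute. -/
theorem comm_chain {s : SecFam} (hs : IsSec s) {n : ℕ} {i j k : Fin n} (hij : i ≠ j) (hik : i ≠ k)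
    (hjk : j ≠ k) :
    Commute (Lam s n i k) (Lam s n j k) ∧ Commute (Lam s n i j) (Lam s n i k) ∧
      Commute (Lam s n i j) (Lam s n j k) := by
  have hn : 2 < n := by
    have := i.2
    have := j.2
    have := k.2
    have : i.1 ≠ j.1 := fun h' => hij (Fin.ext h')
    have : i.1 ≠ k.1 := fun h' => hik (Fin.ext h')
    have : j.1 ≠ k.1 := fun h' => hjk (Fin.ext h')
    omega
  obtain ⟨g, rfl, rfl, rfl⟩ := exists_perm3 (a := (⟨0, by omega⟩ : Fin n)) (b := ⟨1, by omega⟩)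
    (c := ⟨2, by omega⟩) (by simp) (by simp) (by simp) hij hik hjk
  obtain ⟨h1, h2, h3⟩ := comm_base hs hn
  simp only [← Lam_conj hs]
  have key : ∀ x y : UVB n, x * y = y * x →
      Commute (s n g * x * (s n g)⁻¹) (s n g * y * (s n g)⁻¹) := fun x y h =>
    (Commute.conj_iff (s n g)).mpr h
  exact ⟨key _ _ h1, key _ _ h2, key _ _ h3⟩

theorem Lam_last {s : SecFam} (hs : IsSec s) (m : ℕ) :
    Lam s (m+2) (Fin.last m).castSucc (Fin.last (m+1)) = bs (m+2) m := by
  have := Lam_key_top hs (m := m) 1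
  simpa using this.symm

theorem Lam_last_comm {s : SecFam} (hs : IsSec s) {m : ℕ} (x : UVB m) :
    Commute (UVB.incl (m+1) (UVB.incl m x))
      (Lam s (m+2) (Fin.last m).castSucc (Fin.last (m+1))) := by
  rw [Lam_last hs]
  exact bs_comm_incl2 x

theorem comm_disj {s : SecFam} (hs : IsSec s) {n : ℕ} {i j k l : Fin n} (hij : i ≠ j) (hik : i ≠ k)
    (hil : i ≠ l) (hjk : j ≠ k) (hjl : j ≠ l) :
    Commute (Lam s n i j) (Lam s n k l) := by
  obtain ⟨m, rfl⟩ : ∃ m, n = m + 2 := by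
    have := i.2
    have := j.2
    have : i.1 ≠ j.1 := fun h' => hij (Fin.ext h')
    exact ⟨n - 2, by omega⟩
  obtain ⟨g, rfl, rfl⟩ := exists_perm2 (last_ne m) hij
  obtain ⟨k, rfl⟩ := g.surjective k
  obtain ⟨l, rfl⟩ := g.surjective l
  have aux : ∀ k : Fin (m+2), g (Fin.last m).castSucc ≠ g k → g (Fin.last (m+1)) ≠ g k →
      ∃ k' : Fin m, k = k'.castSucc.castSucc := by
    intro k h1 h2
    cases k using Fin.lastCases with
    | last => exact absurd rfl h2
    | cast k =>
      cases k using Fin.lastCases with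
      | last => exact absurd rfl h1
      | cast k => exact ⟨k, rfl⟩
  obtain ⟨k, rfl⟩ := aux k hik hjk
  obtain ⟨l, rfl⟩ := aux l hil hjl
  rw [← Lam_conj hs, ← Lam_conj hs, ← incl_Lam hs, ← incl_Lam hs]
  exact (Commute.conj_iff (s (m+2) g)).mpr (Lam_last_comm hs _).symm

end UVBX

/-! ## Part 3: Markov classes -/

namespace UVBX

open Equiv
open scoped commutatorElement

/-- The Markov class of a braid. -/
def cls {n : ℕ} (a : UVB n) : Quotient (Relation.EqvGen.setoid MarkovBase) := Quotient.mk _ ⟨n, a⟩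

theorem cls_eq_iff {n m : ℕ} (a : UVB n) (b : UVB m) : cls a = cls b ↔ Markov ⟨n, a⟩ ⟨m, b⟩ :=
  Quotient.eq (r := Relation.EqvGen.setoid MarkovBase)

theorem cls_of_base {n m : ℕ} {a : UVB n} {b : UVB m} (h : MarkovBase ⟨n, a⟩ ⟨m, b⟩) :
    cls a = cls b := (cls_eq_iff a b).mpr (Relation.EqvGen.rel _ _ h)

theorem cls_conj {n : ℕ} (g a : UVB n) : cls (g * a * g⁻¹) = cls a :=
  (cls_of_base (MarkovBase.conj n a g)).symm

theorem cls_comm {n : ℕ} (a b : UVB n) : cls (a * b) = cls (b * a) := by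
  rw [← cls_conj b (a * b)]
  congr 1
  group

theorem slide {s : SecFam} (hs : IsSec s) {n : ℕ} (g : Perm (Fin n)) (i j : Fin n) :
    s n g * Lam s n i j = Lam s n (g i) (g j) * s n g := by
  rw [← Lam_conj hs]; group

theorem slide' {s : SecFam} (hs : IsSec s) {n : ℕ} (g : Perm (Fin n)) (i j : Fin n) :
    Lam s n i j * s n g = s n g * Lam s n (g⁻¹ i) (g⁻¹ j) := by
  rw [slide hs]; simp

theorem swap_last_conj {n : ℕ} (k : Fin (n+1)) :
    swap k.castSucc (Fin.last (n+1)) =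
      emb (n+1) (swap k (Fin.last n)) * swap (Fin.last n).castSucc (Fin.last (n+1)) *
        (emb (n+1) (swap k (Fin.last n)))⁻¹ := by
  rw [← swap_apply_apply, emb_castSucc, emb_last, swap_apply_right]

theorem s_swap_last {s : SecFam} (hs : IsSec s) (n : ℕ) :
    s (n+2) (swap (Fin.last n).castSucc (Fin.last (n+1))) = UVB.rho (n+2) (n+1) :=
  s_adj hs (n := n+2) (k := n) (by omega)

/-- Virtual stabilization at an arbitrary place. -/
theorem kink {s : SecFam} (hs : IsSec s) {n : ℕ} (k : Fin n) (a b : UVB n) :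
    cls (UVB.incl n a * s (n+1) (swap k.castSucc (Fin.last n)) * UVB.incl n b) = cls (a * b) := by
  obtain ⟨m, rfl⟩ : ∃ m, n = m + 1 := ⟨n - 1, by have := k.2; omega⟩
  set t := swap k (Fin.last m) with ht
  have e : UVB.incl (m+1) a * s (m+2) (swap k.castSucc (Fin.last (m+1))) * UVB.incl (m+1) b =
      UVB.incl (m+1) (a * s (m+1) t) * (UVB.rho (m+2) (m+1) *
        UVB.incl (m+1) ((s (m+1) t)⁻¹ * b)) := by
    rw [swap_last_conj, ← ht, map_mul, map_mul, s_swap_last hs, map_inv, ← incl_s hs, map_mul,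
      map_mul, map_inv]
    group
  rw [e, ← mul_assoc, cls_comm, ← mul_assoc, ← map_mul,
    ← cls_of_base (MarkovBase.stabVirt (m+1) _), cls_comm]
  congr 1
  group

theorem kink0 {s : SecFam} (hs : IsSec s) {n : ℕ} (k : Fin n) (a : UVB n) :
    cls (UVB.incl n a * s (n+1) (swap k.castSucc (Fin.last n))) = cls a := by
  have := kink hs k a 1
  simpa using this

/-- Negative stabilization at an arbitrary place. -/
theorem kinkL {s : SecFam} (hs : IsSec s) {n : ℕ} (k : Fin n) (a : UVB n) :
    cls (UVB.incl n a * s (n+1) (swap k.castSucc (Fin.last n)) *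
      Lam s (n+1) k.castSucc (Fin.last n)) = cls a := by
  obtain ⟨m, rfl⟩ : ∃ m, n = m + 1 := ⟨n - 1, by have := k.2; omega⟩
  set t := swap k (Fin.last m) with ht
  have e1 : Lam s (m+2) k.castSucc (Fin.last (m+1)) = UVB.incl (m+1) (s (m+1) t) *
      bs (m+2) m * (UVB.incl (m+1) (s (m+1) t))⁻¹ := by
    rw [← Lam_last hs, incl_s hs, Lam_conj hs, emb_castSucc, emb_last, ht, swap_apply_right]
  have e : UVB.incl (m+1) a * s (m+2) (swap k.castSucc (Fin.last (m+1))) *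
      Lam s (m+2) k.castSucc (Fin.last (m+1)) =
      UVB.incl (m+1) (a * s (m+1) t) * ((UVB.sigma (m+2) (m+1))⁻¹ *
        UVB.incl (m+1) ((s (m+1) t)⁻¹)) := by
    rw [e1, swap_last_conj, ← ht, map_mul, map_mul, s_swap_last hs, map_inv, ← incl_s hs, map_mul,
      map_inv, bs]
    have := rho_sq (n := m+2) (k := m) (by omega)
    calc _ = UVB.incl (m+1) a * UVB.incl (m+1) (s (m+1) t) *
        (UVB.rho (m+2) (m+1) * UVB.rho (m+2) (m+1)) * (UVB.sigma (m+2) (m+1))⁻¹ *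
        (UVB.incl (m+1) (s (m+1) t))⁻¹ := by group
      _ = _ := by rw [this]; group
  rw [e, ← mul_assoc, cls_comm, ← mul_assoc, ← map_mul,
    ← cls_of_base (MarkovBase.stabNeg (m+1) _), cls_comm]
  congr 1
  group

/-- The two generators on a pair of strands commute up to Markov equivalence. -/
theorem cls_swap {s : SecFam} (hs : IsSec s) {n : ℕ} (α : UVB n) {a b : Fin n} (hab : a ≠ b) :
    cls (α * Lam s n a b * Lam s n b a) = cls (α * Lam s n b a * Lam s n a b) := by
  set x := Lam s n a b with hx
  set y := Lam s n b a with hy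
  set K1 := s (n+1) (swap a.castSucc (Fin.last n)) with hK1
  set K2 := s (n+2) (swap b.castSucc.castSucc (Fin.last (n+1))) with hK2
  set c := (Fin.last n).castSucc with hc
  set d := Fin.last (n+1) with hd
  set a' := a.castSucc.castSucc with ha'
  set b' := b.castSucc.castSucc with hb'
  set A := UVB.incl (n+1) (UVB.incl n α) with hA
  set g1 := swap a' c with hg1
  set g2 := swap b' d with hg2
  have hab' : a' ≠ b' := by simpa [a', b'] using hab
  have hac : a' ≠ c := fun h =>
    (Fin.castSucc_lt_last a).ne (Fin.castSucc_injective _ h)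
  have hbc : b' ≠ c := fun h =>
    (Fin.castSucc_lt_last b).ne (Fin.castSucc_injective _ h)
  have had : a' ≠ d := (Fin.castSucc_lt_last _).ne
  have hbd : b' ≠ d := (Fin.castSucc_lt_last _).ne
  have hcd : c ≠ d := (Fin.castSucc_lt_last _).ne
  have ix : UVB.incl (n+1) (UVB.incl n x) = Lam s (n+2) a' b' := by
    rw [hx, incl_Lam hs, incl_Lam hs]
  have iy : UVB.incl (n+1) (UVB.incl n y) = Lam s (n+2) b' a' := by
    rw [hy, incl_Lam hs, incl_Lam hs]
  have iK : UVB.incl (n+1) K1 = s (n+2) g1 := by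
    rw [hK1, incl_s hs, emb_swap]
  have L1 : cls (α * x * y) =
      cls (A * Lam s (n+2) a' b' * s (n+2) g1 * Lam s (n+2) b' a' * s (n+2) g2) := by
    rw [← kink hs a (α * x) y, ← kink0 hs b.castSucc]
    simp only [map_mul, ix, iy, iK, ← hK1, ← hK2, A]
    rfl
  have L2 : cls (α * y * x) =
      cls (A * s (n+2) g1 * Lam s (n+2) b' a' * s (n+2) g2 * Lam s (n+2) a' b') := by
    rw [mul_assoc, ← kink hs a α (y * x), map_mul, ← mul_assoc, ← kink hs b.castSucc]
    simp only [map_mul, ix, iy, iK, ← hK1, ← hK2, A]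
    rfl
  have m1 : s (n+2) g1 * Lam s (n+2) b' a' = Lam s (n+2) b' c * s (n+2) g1 := by
    rw [slide hs, hg1, swap_apply_left, swap_apply_of_ne_of_ne hab'.symm hbc]
  have m2 : Lam s (n+2) a' b' * (s (n+2) g1 * s (n+2) g2) =
      (s (n+2) g1 * s (n+2) g2) * Lam s (n+2) c d := by
    rw [← map_mul, slide hs, Perm.mul_apply, Perm.mul_apply, hg1, hg2, swap_apply_right,
      swap_apply_of_ne_of_ne hbc.symm hcd, swap_apply_right, swap_apply_of_ne_of_ne hab'.symm hbc]
  have m3 : Lam s (n+2) c d * (s (n+2) g1 * s (n+2) g2) =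
      (s (n+2) g1 * s (n+2) g2) * Lam s (n+2) a' b' := by
    rw [← map_mul, slide hs, Perm.mul_apply, Perm.mul_apply, hg1, hg2, swap_apply_left,
      swap_apply_of_ne_of_ne hab' had, swap_apply_left, swap_apply_of_ne_of_ne had.symm hcd.symm]
  have k1 : Lam s (n+2) a' b' * Lam s (n+2) b' c = Lam s (n+2) b' c * Lam s (n+2) a' b' :=
    (comm_chain hs hab' hac hbc).2.2
  have k2 : Lam s (n+2) b' c * Lam s (n+2) c d = Lam s (n+2) c d * Lam s (n+2) b' c :=
    (comm_chain hs hbc hbd hcd).2.2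
  have k3 : A * Lam s (n+2) c d = Lam s (n+2) c d * A := Lam_last_comm hs α
  rw [L1, L2]
  generalize Lam s (n+2) a' b' = X at *
  generalize Lam s (n+2) b' a' = Y at *
  generalize Lam s (n+2) b' c = Y' at *
  generalize Lam s (n+2) c d = Z at *
  generalize s (n+2) g1 = κ at *
  generalize s (n+2) g2 = κ' at *
  calc cls (A * X * κ * Y * κ') = cls (A * Y' * (X * (κ * κ'))) := by
        congr 1
        calc _ = A * X * (κ * Y) * κ' := by group
          _ = A * (X * Y') * κ * κ' := by rw [m1]; group
          _ = _ := by rw [k1]; group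
    _ = cls ((A * Y' * (κ * κ')) * Z) := by rw [m2]; congr 1; group
    _ = cls (Z * (A * Y' * (κ * κ'))) := cls_comm _ _
    _ = _ := by
        congr 1
        calc _ = (Z * A) * Y' * (κ * κ') := by group
          _ = A * (Z * Y') * (κ * κ') := by rw [← k3]; group
          _ = A * Y' * (Z * (κ * κ')) := by rw [← k2]; group
          _ = A * (Y' * κ) * κ' * X := by rw [m3]; group
          _ = _ := by rw [← m1]; group

/-- Elements which do not change the Markov class when multiplied. -/
def NN (n : ℕ) : Subgroup (UVB n) where
  carrier := {c | ∀ α : UVB n, cls (α * c) = cls α}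
  one_mem' := by intro α; simp
  mul_mem' := by
    intro a b ha hb α
    rw [← mul_assoc, hb, ha]
  inv_mem' := by
    intro a ha α
    have := ha (α * a⁻¹)
    rw [inv_mul_cancel_right] at this
    exact this.symm

instance (n : ℕ) : (NN n).Normal where
  conj_mem := by
    intro c hc g α
    calc cls (α * (g * c * g⁻¹)) = cls (g⁻¹ * (α * (g * c))) := by
          rw [cls_comm g⁻¹]; congr 1; group
      _ = cls (g⁻¹ * α * g * c) := by congr 1; group
      _ = cls (g⁻¹ * α * g) := hc _
      _ = cls α := by
          have := cls_conj g⁻¹ α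
          rwa [inv_inv] at this

theorem NN_comm_Lam {s : SecFam} (hs : IsSec s) {n : ℕ} (i j k l : Fin n) :
    ⁅Lam s n i j, Lam s n k l⁆ ∈ NN n := by
  have triv : Commute (Lam s n i j) (Lam s n k l) → ⁅Lam s n i j, Lam s n k l⁆ ∈ NN n := by
    intro h
    rw [commutatorElement_eq_one_iff_commute.mpr h]
    exact (NN n).one_mem
  by_cases hij : i = j
  · subst hij; apply triv; rw [Lam_self hs]; exact Commute.one_left _
  by_cases hkl : k = l
  · subst hkl; apply triv; rw [Lam_self hs]; exact Commute.one_right _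
  by_cases hik : i = k
  · subst hik
    by_cases hjl : j = l
    · subst hjl; exact triv (Commute.refl _)
    · exact triv (comm_chain hs hij hkl hjl).2.1
  by_cases hil : i = l
  · subst hil
    by_cases hjk : j = k
    · subst hjk
      intro α
      have := cls_swap hs ((Lam s n j i * Lam s n i j)⁻¹ * α) hij
      calc cls (α * ⁅Lam s n i j, Lam s n j i⁆) =
          cls ((α * (Lam s n i j * Lam s n j i)) * (Lam s n j i * Lam s n i j)⁻¹) := by
            rw [commutatorElement_def]; congr 1; group
        _ = cls ((Lam s n j i * Lam s n i j)⁻¹ * α * Lam s n i j * Lam s n j i) := by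
            rw [cls_comm]; congr 1; group
        _ = _ := this
        _ = cls ((Lam s n j i * Lam s n i j)⁻¹ * (α * (Lam s n j i * Lam s n i j))) := by
            congr 1; group
        _ = cls α := by rw [cls_comm]; congr 1; group
    · exact triv (comm_chain hs hkl (Ne.symm hjk) hij).2.2.symm
  by_cases hjk : j = k
  · subst hjk
    exact triv (comm_chain hs hij hil hkl).2.2
  by_cases hjl : j = l
  · subst hjl
    exact triv (comm_chain hs hik hij hkl).1
  exact triv (comm_disj hs hij hik hil hjk hjl)

end UVBX

/-! ## Part 4: reduction to pure braids -/

namespace UVBX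

open Equiv
open scoped commutatorElement

/-- A family of homomorphisms onto symmetric groups. -/
abbrev IoFam := ∀ n, UVB n →* Perm (Fin n)

/-- The family is the standard one. -/
def IsIo (ι : IoFam) : Prop := ∀ n, IsIota n (ι n)

theorem io_sigma {ι : IoFam} (hι : IsIo ι) {n k : ℕ} (h : k + 1 < n) :
    ι n (UVB.sigma n (k+1)) = adj n k h := (hι n (k+1) (by omega) (by omega)).1

theorem io_rho {ι : IoFam} (hι : IsIo ι) {n k : ℕ} (h : k + 1 < n) :
    ι n (UVB.rho n (k+1)) = adj n k h := (hι n (k+1) (by omega) (by omega)).2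

theorem io_s {s : SecFam} (hs : IsSec s) {ι : IoFam} (hι : IsIo ι) {n : ℕ} (g : Perm (Fin n)) :
    ι n (s n g) = g := by
  refine perm_generated (((ι n).comp (s n)).eqLocus (MonoidHom.id _)) ?_ g
  intro k hk
  change ι n (s n (adj n k hk)) = adj n k hk
  rw [s_adj hs, io_rho hι hk]

theorem io_Lam {s : SecFam} (hs : IsSec s) {ι : IoFam} (hι : IsIo ι) {n : ℕ} (i j : Fin n) :
    ι n (Lam s n i j) = 1 := by
  by_cases h : i = j
  · subst h; rw [Lam_self hs, map_one]
  · obtain ⟨m, e, g, -, -, h3⟩ := exists_Lam hs h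
    rw [h3, bs, map_mul, map_mul, map_mul, map_inv, map_inv, io_rho hι e, io_sigma hι e]
    group

theorem io_incl {ι : IoFam} (hι : IsIo ι) {n : ℕ} (α : UVB n) :
    ι (n+1) (UVB.incl n α) = emb n (ι n α) := by
  have : (ι (n+1)).comp (UVB.incl n) = (emb n).comp (ι n) := by
    apply hom_ext
    · intro k hk
      simp only [MonoidHom.comp_apply]
      rw [incl_sigma hk, io_sigma hι hk, io_sigma hι (by omega), adj, adj, emb_swap]
      rfl
    · intro k hk
      simp only [MonoidHom.comp_apply]
      rw [incl_rho hk, io_rho hι hk, io_rho hι (by omega), adj, adj, emb_swap]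
      rfl
  exact DFunLike.congr_fun this α

/-- The subgroup generated by the λ's. -/
def PP (s : SecFam) (n : ℕ) : Subgroup (UVB n) :=
  Subgroup.closure (Set.range fun p : Fin n × Fin n => Lam s n p.1 p.2)

theorem Lam_mem (s : SecFam) {n : ℕ} (i j : Fin n) : Lam s n i j ∈ PP s n :=
  Subgroup.subset_closure ⟨(i, j), rfl⟩

theorem PP_conj {s : SecFam} (hs : IsSec s) {n : ℕ} (g : Perm (Fin n)) {x : UVB n}
    (hx : x ∈ PP s n) : s n g * x * (s n g)⁻¹ ∈ PP s n := by
  have : PP s n ≤ (PP s n).comap (MulAut.conj (s n g)).toMonoidHom := by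
    refine (Subgroup.closure_le _).mpr ?_
    rintro _ ⟨⟨i, j⟩, rfl⟩
    change s n g * Lam s n i j * (s n g)⁻¹ ∈ PP s n
    rw [Lam_conj hs]
    exact Lam_mem s _ _
  exact this hx

theorem decomp {s : SecFam} (hs : IsSec s) {ι : IoFam} (hι : IsIo ι) {n : ℕ} (α : UVB n) :
    ∃ p ∈ PP s n, α = p * s n (ι n α) := by
  let H : Subgroup (UVB n) :=
    { carrier := {α | α * (s n (ι n α))⁻¹ ∈ PP s n}
      one_mem' := by simp [(PP s n).one_mem]
      mul_mem' := by
        intro a b ha hb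
        have := (PP s n).mul_mem ha (PP_conj hs (ι n a) hb)
        simp only [Set.mem_ofPred_eq, map_mul]
        convert this using 1
        group
      inv_mem' := by
        intro a ha
        have := PP_conj hs (ι n a)⁻¹ ((PP s n).inv_mem ha)
        simp only [Set.mem_ofPred_eq, map_inv]
        convert this using 1
        simp only [map_inv]
        group }
  have : α ∈ H := by
    refine generated H ?_ ?_ α
    · intro k hk
      change UVB.sigma n (k+1) * (s n (ι n (UVB.sigma n (k+1))))⁻¹ ∈ PP s n
      rw [io_sigma hι hk, s_adj hs]
      have := (PP s n).inv_mem (Lam_mem s ⟨k, by omega⟩ ⟨k+1, hk⟩)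
      rw [Lam_adj hs] at this
      convert this using 1
      group
    · intro k hk
      change UVB.rho n (k+1) * (s n (ι n (UVB.rho n (k+1))))⁻¹ ∈ PP s n
      rw [io_rho hι hk, s_adj hs, mul_inv_cancel]
      exact (PP s n).one_mem
  exact ⟨_, this, by group⟩

theorem io_PP {s : SecFam} (hs : IsSec s) {ι : IoFam} (hι : IsIo ι) {n : ℕ} {x : UVB n}
    (hx : x ∈ PP s n) : ι n x = 1 := by
  have : PP s n ≤ (ι n).ker := by
    refine (Subgroup.closure_le _).mpr ?_
    rintro _ ⟨⟨i, j⟩, rfl⟩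
    exact io_Lam hs hι i j
  exact this hx

theorem PP_eq_ker {s : SecFam} (hs : IsSec s) {ι : IoFam} (hι : IsIo ι) (n : ℕ) :
    PP s n = (ι n).ker := by
  apply le_antisymm
  · intro x hx; exact io_PP hs hι hx
  · intro x hx
    obtain ⟨p, hp, h⟩ := decomp hs hι x
    rw [MonoidHom.mem_ker.mp hx, map_one, mul_one] at h
    rwa [h]

theorem incl_PP {s : SecFam} (hs : IsSec s) {n : ℕ} {x : UVB n}
    (hx : x ∈ PP s n) : UVB.incl n x ∈ PP s (n+1) := by
  have : PP s n ≤ (PP s (n+1)).comap (UVB.incl n) := by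
    refine (Subgroup.closure_le _).mpr ?_
    rintro _ ⟨⟨i, j⟩, rfl⟩
    change UVB.incl n (Lam s n i j) ∈ PP s (n+1)
    rw [incl_Lam hs]
    exact Lam_mem s _ _
  exact this hx

theorem q_comm {s : SecFam} (hs : IsSec s) {n : ℕ} {x y : UVB n}
    (hx : x ∈ PP s n) (hy : y ∈ PP s n) :
    Commute (QuotientGroup.mk' (NN n) x) (QuotientGroup.mk' (NN n) y) := by
  unfold PP at hx hy
  induction hx using Subgroup.closure_induction with
  | one => rw [map_one]; exact Commute.one_left _
  | mul a b _ _ ha hb => rw [map_mul]; exact ha.mul_left hb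
  | inv a _ ha => rw [map_inv]; exact ha.inv_left
  | mem a ha =>
    obtain ⟨⟨i, j⟩, rfl⟩ := ha
    induction hy using Subgroup.closure_induction with
    | one => rw [map_one]; exact Commute.one_right _
    | mul a b _ _ ha hb => rw [map_mul]; exact ha.mul_right hb
    | inv a _ ha => rw [map_inv]; exact ha.inv_right
    | mem b hb =>
      obtain ⟨⟨k, l⟩, rfl⟩ := hb
      rw [← commutatorElement_eq_one_iff_commute, ← map_commutatorElement]
      exact (QuotientGroup.eq_one_iff _).mpr (NN_comm_Lam hs i j k l)

theorem cls_q {n : ℕ} {a b : UVB n}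
    (h : QuotientGroup.mk' (NN n) a = QuotientGroup.mk' (NN n) b) : cls a = cls b := by
  have h2 : a⁻¹ * b ∈ NN n := QuotientGroup.eq.mp h
  have := h2 a
  rw [mul_inv_cancel_left] at this
  exact this.symm

theorem cls_pc {s : SecFam} (hs : IsSec s) {n : ℕ} {x y : UVB n}
    (hx : x ∈ PP s n) (hy : y ∈ PP s n) (α : UVB n) : cls (x * (y * α)) = cls (y * (x * α)) := by
  apply cls_q
  have := q_comm hs hx hy
  rw [map_mul, map_mul, map_mul, map_mul, ← mul_assoc, this.eq, mul_assoc]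

theorem ker_comm_le {s : SecFam} (hs : IsSec s) {ι : IoFam} (hι : IsIo ι) (n : ℕ) :
    ⁅(ι n).ker, (ι n).ker⁆ ≤ NN n := by
  rw [Subgroup.commutator_le]
  intro x hx y hy
  rw [← PP_eq_ker hs hι] at hx hy
  have := q_comm hs hx hy
  rw [← commutatorElement_eq_one_iff_commute, ← map_commutatorElement] at this
  exact (QuotientGroup.eq_one_iff _).mp this

theorem diag {s : SecFam} (hs : IsSec s) {ι : IoFam} (hι : IsIo ι) {n : ℕ} (α : UVB n)
    (i j : Fin n) : cls (α * Lam s n i j) = cls (α * Lam s n (ι n α i) (ι n α j)) := by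
  obtain ⟨p, hp, h⟩ := decomp hs hι α
  rw [cls_comm α (Lam s n (ι n α i) (ι n α j))]
  generalize ι n α = π at *
  subst h
  rw [mul_assoc, slide hs]
  exact cls_pc hs hp (Lam_mem s _ _) _

theorem elim2 {s : SecFam} (hs : IsSec s) {ι : IoFam} (hι : IsIo ι) {n : ℕ} (α : UVB n)
    {k x : Fin n} (hkx : k ≠ x) (h1 : ι n α k = x) (h2 : ι n α x = k) :
    cls (α * Lam s n x k) = cls α := by
  have hc : k.castSucc ≠ x.castSucc := fun h => hkx (Fin.castSucc_injective _ h)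
  have hk : k.castSucc ≠ Fin.last n := (Fin.castSucc_lt_last _).ne
  have hx : x.castSucc ≠ Fin.last n := (Fin.castSucc_lt_last _).ne
  rw [diag hs hι, h1, h2, ← kink0 hs k, map_mul, incl_Lam hs, mul_assoc, slide' hs, swap_inv,
    swap_apply_left, swap_apply_of_ne_of_ne hc.symm hx, ← mul_assoc]
  have e : ∀ y, ι (n+1) (UVB.incl n α * s (n+1) (swap k.castSucc (Fin.last n))) y =
      emb n (ι n α) (swap k.castSucc (Fin.last n) y) := by
    intro y
    rw [map_mul, io_incl hι, io_s hs hι]; rfl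
  rw [diag hs hι, e, e, swap_apply_right, swap_apply_of_ne_of_ne hc.symm hx, emb_castSucc,
    emb_castSucc, h1, h2, diag hs hι, e, e, swap_apply_left,
    swap_apply_of_ne_of_ne hc.symm hx, emb_castSucc, emb_last, h2, kinkL hs]

theorem elim_last {s : SecFam} (hs : IsSec s) {ι : IoFam} (hι : IsIo ι) {n : ℕ}
    (π : Perm (Fin (n+1))) (hπ : π (Fin.last n) ≠ Fin.last n) {p : UVB (n+1)}
    (hp : p ∈ PP s (n+1)) :
    ∃ t ∈ PP s n, ∀ α : UVB (n+1), ι (n+1) α = π → cls (p * α) = cls (UVB.incl n t * α) := by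
  unfold PP at hp
  induction hp using Subgroup.closure_induction with
  | one => exact ⟨1, one_mem _, by simp⟩
  | mul a b ha hb iha ihb =>
    obtain ⟨t1, h1, e1⟩ := iha
    obtain ⟨t2, h2, e2⟩ := ihb
    refine ⟨t2 * t1, mul_mem h2 h1, fun α hα => ?_⟩
    rw [mul_assoc, e1 (b * α) (by rw [map_mul, io_PP hs hι hb, one_mul, hα]),
      cls_pc hs (incl_PP hs h1) hb, e2 _ (by rw [map_mul, io_PP hs hι (incl_PP hs h1), one_mul, hα]),
      map_mul, mul_assoc]
  | inv a ha iha =>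
    obtain ⟨t, h, e⟩ := iha
    refine ⟨t⁻¹, inv_mem h, fun α hα => ?_⟩
    have hi := incl_PP hs h
    have e' := e ((UVB.incl n t)⁻¹ * (a⁻¹ * α)) (by
      rw [map_mul, map_mul, map_inv, map_inv, io_PP hs hι ha, io_PP hs hι hi]; simp [hα])
    rw [mul_inv_cancel_left] at e'
    rw [← e', cls_pc hs ha (inv_mem hi), mul_inv_cancel_left, map_inv]
  | mem a ha =>
    obtain ⟨⟨i, j⟩, rfl⟩ := ha
    have good : ∀ i j : Fin (n+1), i ≠ Fin.last n → j ≠ Fin.last n →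
        ∃ t ∈ PP s n, ∀ α : UVB (n+1), cls (α * Lam s (n+1) i j) = cls (UVB.incl n t * α) := by
      intro i j hi hj
      obtain ⟨i, rfl⟩ := Fin.exists_castSucc_eq.mpr hi
      obtain ⟨j, rfl⟩ := Fin.exists_castSucc_eq.mpr hj
      refine ⟨Lam s n i j, Lam_mem s i j, fun α => ?_⟩
      rw [incl_Lam hs, cls_comm]
    by_cases hij : i = j
    · subst hij
      refine ⟨1, one_mem _, fun α _ => ?_⟩
      simp [Lam_self hs]
    by_cases c1 : π i ≠ Fin.last n ∧ π j ≠ Fin.last n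
    · obtain ⟨t, ht, e⟩ := good _ _ c1.1 c1.2
      refine ⟨t, ht, fun α hα => ?_⟩
      rw [cls_comm, diag hs hι, hα, e]
    by_cases c2 : π (π i) ≠ Fin.last n ∧ π (π j) ≠ Fin.last n
    · obtain ⟨t, ht, e⟩ := good _ _ c2.1 c2.2
      refine ⟨t, ht, fun α hα => ?_⟩
      rw [cls_comm, diag hs hι, hα, diag hs hι, hα, e]
    by_cases c0 : i ≠ Fin.last n ∧ j ≠ Fin.last n
    · obtain ⟨t, ht, e⟩ := good _ _ c0.1 c0.2
      refine ⟨t, ht, fun α hα => ?_⟩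
      rw [cls_comm, e]
    have hinj := π.injective
    have key : π j = i ∧ π i = j := by
      have := @hinj
      by_cases hi : i = Fin.last n
      · have h1 : π j = Fin.last n := by
          by_contra h; exact c1 ⟨by rw [hi]; exact hπ, h⟩
        have h2 : π (π i) = Fin.last n := by
          by_contra h; exact c2 ⟨h, by rw [h1]; exact hπ⟩
        exact ⟨by rw [h1, hi], hinj (by rw [h2, h1])⟩
      · have hj : j = Fin.last n := by
          by_contra h; exact c0 ⟨hi, h⟩
        have h1 : π i = Fin.last n := by
          by_contra h; exact c1 ⟨h, by rw [hj]; exact hπ⟩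
        have h2 : π (π j) = Fin.last n := by
          by_contra h; exact c2 ⟨by rw [h1]; exact hπ, h⟩
        exact ⟨hinj (by rw [h2, h1]), by rw [h1, hj]⟩
    refine ⟨1, one_mem _, fun α hα => ?_⟩
    subst hα
    rw [cls_comm, elim2 hs hι α (Ne.symm hij) key.1 key.2, map_one, one_mul]

/-- Every braid is Markov equivalent to a pure braid. -/
theorem exists_pure {s : SecFam} (hs : IsSec s) {ι : IoFam} (hι : IsIo ι) (n : ℕ)
    (α : UVB (n+1)) : ∃ (m : ℕ) (p : UVB (m+1)), p ∈ (ι (m+1)).ker ∧ cls α = cls p := by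
  induction n with
  | zero => exact ⟨0, α, Equiv.ext fun x => Fin.ext (by omega), rfl⟩
  | succ n ih =>
    by_cases h1 : ι (n+2) α = 1
    · exact ⟨n+1, α, h1, rfl⟩
    obtain ⟨a, ha⟩ : ∃ a, ι (n+2) α a ≠ a := by
      by_contra! h
      exact h1 (Equiv.ext h)
    set t := swap a (Fin.last (n+1)) with ht
    set α' := s (n+2) t * α * (s (n+2) t)⁻¹ with hα'
    have hcl : cls α' = cls α := cls_conj _ _
    obtain ⟨p, hp, hd⟩ := decomp hs hι α'
    set π := ι (n+2) α' with hπ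
    have hπe : π = t * ι (n+2) α * t⁻¹ := by
      rw [hπ, hα', map_mul, map_mul, map_inv, io_s hs hι]
    have hl : π (Fin.last (n+1)) ≠ Fin.last (n+1) := by
      rw [hπe, ht, swap_inv, Perm.mul_apply, Perm.mul_apply, swap_apply_right]
      intro h
      apply ha
      have h' : swap a (Fin.last (n+1)) (ι (n+2) α a) = swap a (Fin.last (n+1)) a := by
        rw [h, swap_apply_left]
      exact (swap a (Fin.last (n+1))).injective h'
    obtain ⟨u, -, hu⟩ := elim_last hs hι π hl hp
    have hk : π⁻¹ (Fin.last (n+1)) ≠ Fin.last (n+1) := by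
      intro h
      apply hl
      conv_lhs => rw [← h]
      simp
    obtain ⟨k, hk'⟩ := Fin.exists_castSucc_eq.mpr hk
    have hπk : π k.castSucc = Fin.last (n+1) := by rw [hk']; simp
    obtain ⟨g, hg⟩ := exists_emb (π * swap k.castSucc (Fin.last (n+1))) (by
      rw [Perm.mul_apply, swap_apply_right, hπk])
    have hπ2 : π = emb (n+1) g * swap k.castSucc (Fin.last (n+1)) := by
      rw [← hg, mul_assoc, swap_mul_self, mul_one]
    obtain ⟨m, q, hq, e⟩ := ih (u * s (n+1) g)
    refine ⟨m, q, hq, ?_⟩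
    rw [← hcl, hd, hu _ (io_s hs hι π), ← e, ← kink0 hs k, hπ2, map_mul, map_mul, ← incl_s hs,
      mul_assoc]

end UVBX

/-! ## Part 5: linking numbers -/

namespace UVBX

open Equiv

/-- Integer matrices. -/
abbrev Mat (n : ℕ) := Fin n → Fin n → ℤ

/-- Elementary matrix. -/
def E {n : ℕ} (i j : Fin n) : Mat n := fun a b => if a = i ∧ b = j then 1 else 0

/-- Action of permutations on matrices. -/
def act {n : ℕ} (g : Perm (Fin n)) (M : Mat n) : Mat n := fun a b => M (g⁻¹ a) (g⁻¹ b)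

theorem act_add {n : ℕ} (g : Perm (Fin n)) (M N : Mat n) : act g (M + N) = act g M + act g N := rfl
theorem act_neg {n : ℕ} (g : Perm (Fin n)) (M : Mat n) : act g (-M) = -act g M := rfl
theorem act_zero {n : ℕ} (g : Perm (Fin n)) : act g (0 : Mat n) = 0 := rfl
theorem act_one {n : ℕ} (M : Mat n) : act 1 M = M := rfl
theorem act_mul {n : ℕ} (g h : Perm (Fin n)) (M : Mat n) : act (g * h) M = act g (act h M) := by
  funext a b
  simp [act, mul_inv_rev]

theorem act_E {n : ℕ} (g : Perm (Fin n)) (i j : Fin n) : act g (E i j) = E (g i) (g j) := by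
  funext a b
  simp only [act, E, Perm.inv_eq_iff_eq]

theorem act_inv_act {n : ℕ} (g : Perm (Fin n)) (M : Mat n) : act g⁻¹ (act g M) = M := by
  rw [← act_mul, inv_mul_cancel, act_one]

theorem act_act_inv {n : ℕ} (g : Perm (Fin n)) (M : Mat n) : act g (act g⁻¹ M) = M := by
  rw [← act_mul, mul_inv_cancel, act_one]

/-- Affine transformation of the space of matrices. -/
def Aff {n : ℕ} (g : Perm (Fin n)) (c : Mat n) : Perm (Mat n) where
  toFun M := act g M + c
  invFun M := act g⁻¹ (M - c)
  left_inv M := by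
    dsimp only
    rw [add_sub_cancel_right, act_inv_act]
  right_inv M := by
    dsimp only
    rw [act_act_inv, sub_add_cancel]

theorem Aff_apply {n : ℕ} (g : Perm (Fin n)) (c M : Mat n) : Aff g c M = act g M + c := rfl

theorem Aff_mul {n : ℕ} (g h : Perm (Fin n)) (c d : Mat n) :
    Aff g c * Aff h d = Aff (g * h) (c + act g d) := by
  apply Equiv.ext
  intro M
  rw [Perm.mul_apply, Aff_apply, Aff_apply, Aff_apply, act_add, act_mul]
  abel

theorem Aff_one {n : ℕ} : Aff (1 : Perm (Fin n)) 0 = 1 := by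
  apply Equiv.ext
  intro M
  rw [Aff_apply, act_one, add_zero, Perm.one_apply]

theorem Aff_inv {n : ℕ} (g : Perm (Fin n)) (c : Mat n) :
    (Aff g c)⁻¹ = Aff g⁻¹ (-act g⁻¹ c) := by
  rw [inv_eq_iff_mul_eq_one, Aff_mul, act_neg, act_act_inv, mul_inv_cancel, add_neg_cancel, Aff_one]

/-- Images of the generators. -/
def affGen (n : ℕ) : UVBGen n → Perm (Mat n)
  | Sum.inl i => Aff (adj n i.1 (by omega)) (-E ⟨i.1, by omega⟩ ⟨i.1+1, by omega⟩)
  | Sum.inr i => Aff (adj n i.1 (by omega)) 0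

theorem affGen_rel {ι : ∀ n, UVB n →* Perm (Fin n)} (hι : IsIo ι) (n : ℕ) :
    ∀ r ∈ uvbRels n, FreeGroup.lift (affGen n) r = 1 := by
  have hS : ∀ i : Fin (n-1), FreeGroup.lift (affGen n) (UVBGen.sg i) = affGen n (Sum.inl i) :=
    fun i => FreeGroup.lift_apply_of
  have hR : ∀ i : Fin (n-1), FreeGroup.lift (affGen n) (UVBGen.rg i) = affGen n (Sum.inr i) :=
    fun i => FreeGroup.lift_apply_of
  intro r hr
  rcases hr with ⟨i, j, hij, hc⟩ | ⟨i, j, hij, hc⟩ | ⟨i, hc⟩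
  · obtain ⟨i, hi⟩ := i
    obtain ⟨j, hj⟩ := j
    simp only at hij
    subst hij
    have hb : i + 2 < n := by omega
    have hrel := (rel_near hb).2.1
    have hrel' := congrArg (ι n) hrel
    simp only [map_mul, io_rho hι (show i + 1 < n by omega), io_rho hι (show i + 1 + 1 < n by omega)]
      at hrel'
    have n01 : (⟨i, by omega⟩ : Fin n) ≠ ⟨i+1, by omega⟩ := by simp
    have n02 : (⟨i, by omega⟩ : Fin n) ≠ ⟨i+1+1, by omega⟩ := by simp; omega
    have n12 : (⟨i+1, by omega⟩ : Fin n) ≠ ⟨i+1+1, by omega⟩ := by simp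
    have a0 : adj n i (by omega) ⟨i, by omega⟩ = ⟨i+1, by omega⟩ := swap_apply_left _ _
    have a1 : adj n i (by omega) ⟨i+1, by omega⟩ = ⟨i, by omega⟩ := swap_apply_right _ _
    have a2 : adj n i (by omega) ⟨i+1+1, by omega⟩ = ⟨i+1+1, by omega⟩ :=
      swap_apply_of_ne_of_ne n02.symm n12.symm
    have b0 : adj n (i+1) (by omega) ⟨i, by omega⟩ = ⟨i, by omega⟩ :=
      swap_apply_of_ne_of_ne n01 n02
    have b1 : adj n (i+1) (by omega) ⟨i+1, by omega⟩ = ⟨i+1+1, by omega⟩ := swap_apply_left _ _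
    have b2 : adj n (i+1) (by omega) ⟨i+1+1, by omega⟩ = ⟨i+1, by omega⟩ := swap_apply_right _ _
    rcases hc with h | h | h | h | h <;> subst h <;>
      simp only [map_mul, map_inv, hS, hR, affGen] <;> rw [mul_inv_eq_one] <;>
      simp only [Aff_mul, hrel', act_neg, act_zero, act_E, a0, a1, a2, b0, b1, b2,
        Perm.mul_apply, add_zero, zero_add]
    · congr 1; abel
    · congr 1; abel
    · congr 1; abel
  · obtain ⟨i, hi⟩ := i
    obtain ⟨j, hj⟩ := j
    simp only at hij
    have hrel := (rel_far (show i + 1 < n by omega) (show j + 1 < n by omega) hij).2.1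
    have hrel' := congrArg (ι n) hrel
    simp only [map_mul, io_rho hι (show i + 1 < n by omega), io_rho hι (show j + 1 < n by omega)]
      at hrel'
    have a0 : adj n i (by omega) ⟨j, by omega⟩ = ⟨j, by omega⟩ :=
      swap_apply_of_ne_of_ne (by simp; omega) (by simp; omega)
    have a1 : adj n i (by omega) ⟨j+1, by omega⟩ = ⟨j+1, by omega⟩ :=
      swap_apply_of_ne_of_ne (by simp; omega) (by simp; omega)
    have b0 : adj n j (by omega) ⟨i, by omega⟩ = ⟨i, by omega⟩ :=
      swap_apply_of_ne_of_ne (by simp; omega) (by simp; omega)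
    have b1 : adj n j (by omega) ⟨i+1, by omega⟩ = ⟨i+1, by omega⟩ :=
      swap_apply_of_ne_of_ne (by simp; omega) (by simp; omega)
    rcases hc with h | h | h <;> subst h <;>
      simp only [map_mul, map_inv, hS, hR, affGen] <;> rw [mul_inv_eq_one] <;>
      simp only [Aff_mul, hrel', act_neg, act_zero, act_E, a0, a1, b0, b1,
        add_zero, zero_add]
    congr 1; abel
  · obtain ⟨i, hi⟩ := i
    have hrel := rho_sq (show i + 1 < n by omega)
    have hrel' := congrArg (ι n) hrel
    simp only [map_mul, map_one, io_rho hι (show i + 1 < n by omega)] at hrel'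
    subst hc
    simp only [map_mul, hR, affGen, Aff_mul, hrel', act_zero, add_zero, Aff_one]

/-- The affine representation. -/
def AA {ι : IoFam} (hι : IsIo ι) (n : ℕ) : UVB n →* Perm (Mat n) :=
  PresentedGroup.toGroup (affGen_rel hι n)

/-- The linking matrix. -/
def LL {ι : IoFam} (hι : IsIo ι) {n : ℕ} (α : UVB n) : Mat n := AA hι n α 0

theorem AA_sigma {ι : IoFam} (hι : IsIo ι) {n k : ℕ} (h : k + 1 < n) :
    AA hι n (UVB.sigma n (k+1)) = Aff (adj n k h) (-E ⟨k, by omega⟩ ⟨k+1, h⟩) := by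
  rw [sigma_def h]
  exact PresentedGroup.toGroup.of _

theorem AA_rho {ι : IoFam} (hι : IsIo ι) {n k : ℕ} (h : k + 1 < n) :
    AA hι n (UVB.rho n (k+1)) = Aff (adj n k h) 0 := by
  rw [rho_def h]
  exact PresentedGroup.toGroup.of _

theorem AA_eq {ι : IoFam} (hι : IsIo ι) {n : ℕ} (α : UVB n) :
    AA hι n α = Aff (ι n α) (LL hι α) := by
  let H : Subgroup (UVB n) :=
    { carrier := {α | ∃ c, AA hι n α = Aff (ι n α) c}
      one_mem' := ⟨0, by rw [map_one, map_one, Aff_one]⟩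
      mul_mem' := by
        rintro a b ⟨c, hc⟩ ⟨d, hd⟩
        exact ⟨_, by rw [map_mul, map_mul, hc, hd, Aff_mul]⟩
      inv_mem' := by
        rintro a ⟨c, hc⟩
        exact ⟨_, by rw [map_inv, map_inv, hc, Aff_inv]⟩ }
  obtain ⟨c, hc⟩ : α ∈ H := generated H
    (fun k hk => ⟨_, by rw [AA_sigma hι hk, io_sigma hι hk]⟩)
    (fun k hk => ⟨_, by rw [AA_rho hι hk, io_rho hι hk]⟩) α
  rw [LL, hc, Aff_apply, act_zero, zero_add]

theorem LL_mul {ι : IoFam} (hι : IsIo ι) {n : ℕ} (α β : UVB n) :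
    LL hι (α * β) = LL hι α + act (ι n α) (LL hι β) := by
  rw [LL, map_mul, Perm.mul_apply, ← LL, AA_eq hι α, Aff_apply, add_comm]

theorem LL_one {ι : IoFam} (hι : IsIo ι) {n : ℕ} : LL hι (1 : UVB n) = 0 := by
  rw [LL, map_one, Perm.one_apply]

theorem LL_inv {ι : IoFam} (hι : IsIo ι) {n : ℕ} (α : UVB n) :
    LL hι α⁻¹ = -act (ι n α)⁻¹ (LL hι α) := by
  have := LL_mul hι α⁻¹ α
  rw [inv_mul_cancel, LL_one, map_inv] at this
  exact eq_neg_of_add_eq_zero_left this.symm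

theorem LL_sigma {ι : IoFam} (hι : IsIo ι) {n k : ℕ} (h : k + 1 < n) :
    LL hι (UVB.sigma n (k+1)) = -E ⟨k, by omega⟩ ⟨k+1, h⟩ := by
  rw [LL, AA_sigma hι h, Aff_apply, act_zero, zero_add]

theorem LL_rho {ι : IoFam} (hι : IsIo ι) {n k : ℕ} (h : k + 1 < n) :
    LL hι (UVB.rho n (k+1)) = 0 := by
  rw [LL, AA_rho hι h, Aff_apply, act_zero, zero_add]

theorem LL_sigma_inv {ι : IoFam} (hι : IsIo ι) {n k : ℕ} (h : k + 1 < n) :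
    LL hι (UVB.sigma n (k+1))⁻¹ = E ⟨k+1, h⟩ ⟨k, by omega⟩ := by
  rw [LL_inv, LL_sigma hι h, act_neg, act_E, io_sigma hι h, neg_neg, adj, swap_inv, swap_apply_left,
    swap_apply_right]

theorem LL_s {s : SecFam} (hs : IsSec s) {ι : IoFam} (hι : IsIo ι) {n : ℕ} (g : Perm (Fin n)) :
    LL hι (s n g) = 0 := by
  let H : Subgroup (Perm (Fin n)) :=
    { carrier := {g | LL hι (s n g) = 0}
      one_mem' := by
        change LL hι (s n 1) = 0
        rw [map_one, LL_one]
      mul_mem' := by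
        intro a b (ha : LL hι (s n a) = 0) (hb : LL hι (s n b) = 0)
        change LL hι (s n (a * b)) = 0
        rw [map_mul, LL_mul, ha, hb, act_zero, add_zero]
      inv_mem' := by
        intro a (ha : LL hι (s n a) = 0)
        change LL hι (s n a⁻¹) = 0
        rw [map_inv, LL_inv, ha, act_zero, neg_zero] }
  refine perm_generated H ?_ g
  intro k hk
  change LL hι (s n (adj n k hk)) = 0
  rw [s_adj hs, LL_rho hι hk]

theorem LL_conj_s {s : SecFam} (hs : IsSec s) {ι : IoFam} (hι : IsIo ι) {n : ℕ} (g : Perm (Fin n))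
    (x : UVB n) : LL hι (s n g * x * (s n g)⁻¹) = act g (LL hι x) := by
  rw [← map_inv, LL_mul, LL_mul, LL_s hs, LL_s hs, act_zero, add_zero, zero_add, io_s hs hι]

theorem LL_Lam {s : SecFam} (hs : IsSec s) {ι : IoFam} (hι : IsIo ι) {n : ℕ} {i j : Fin n}
    (h : i ≠ j) : LL hι (Lam s n i j) = E i j := by
  obtain ⟨m, e, g, h1, h2, h3⟩ := exists_Lam hs h
  rw [h3, LL_conj_s hs, bs, LL_mul, LL_rho hι e, LL_sigma_inv hι e, zero_add, io_rho hι e, act_E,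
    adj, swap_apply_left, swap_apply_right, act_E, h1, h2]

theorem LL_diag {ι : IoFam} (hι : IsIo ι) {n : ℕ} (α : UVB n) (i : Fin n) : LL hι α i i = 0 := by
  let H : Subgroup (UVB n) :=
    { carrier := {α | ∀ i, LL hι α i i = 0}
      one_mem' := by
        intro i
        rw [LL_one]; rfl
      mul_mem' := by
        intro a b ha hb i
        rw [LL_mul, Pi.add_apply, Pi.add_apply, ha, act, hb, add_zero]
      inv_mem' := by
        intro a ha i
        rw [LL_inv, Pi.neg_apply, Pi.neg_apply, act, ha, neg_zero] }
  refine generated H ?_ ?_ α i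
  · intro k hk i
    rw [LL_sigma hι hk, Pi.neg_apply, Pi.neg_apply, E, if_neg, neg_zero]
    rintro ⟨rfl, h⟩
    simp at h
  · intro k hk i
    rw [LL_rho hι hk]; rfl

/-- Extension of a matrix by zero. -/
def extM {n : ℕ} (M : Mat n) : Mat (n+1) :=
  Fin.lastCases 0 (fun i => Fin.lastCases 0 (fun j => M i j))

theorem extM_cc {n : ℕ} (M : Mat n) (i j : Fin n) : extM M i.castSucc j.castSucc = M i j := by
  simp [extM]

theorem extM_cl {n : ℕ} (M : Mat n) (i : Fin n) : extM M i.castSucc (Fin.last n) = 0 := by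
  simp [extM]

theorem extM_l {n : ℕ} (M : Mat n) (i : Fin (n+1)) : extM M (Fin.last n) i = 0 := by
  simp [extM]

theorem extM_add {n : ℕ} (M N : Mat n) : extM (M + N) = extM M + extM N := by
  funext a b
  cases a using Fin.lastCases <;> cases b using Fin.lastCases <;>
    simp [extM_cc, extM_cl, extM_l]

theorem extM_neg {n : ℕ} (M : Mat n) : extM (-M) = -extM M := by
  funext a b
  cases a using Fin.lastCases <;> cases b using Fin.lastCases <;>
    simp [extM_cc, extM_cl, extM_l]

theorem extM_zero {n : ℕ} : extM (0 : Mat n) = 0 := by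
  funext a b
  cases a using Fin.lastCases <;> cases b using Fin.lastCases <;>
    simp [extM_cc, extM_cl, extM_l]

theorem extM_E {n : ℕ} (i j : Fin n) : extM (E i j) = E i.castSucc j.castSucc := by
  have h : ∀ k : Fin n, Fin.last n ≠ k.castSucc := fun k => (Fin.castSucc_lt_last k).ne'
  funext a b
  cases a using Fin.lastCases <;> cases b using Fin.lastCases <;>
    simp [extM_cc, extM_cl, extM_l, E, h]

theorem extM_act {n : ℕ} (g : Perm (Fin n)) (M : Mat n) :
    extM (act g M) = act (emb n g) (extM M) := by
  funext a b
  cases a using Fin.lastCases <;> cases b using Fin.lastCases <;>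
    simp [extM_cc, extM_cl, extM_l, act, ← map_inv]

theorem LL_incl {ι : IoFam} (hι : IsIo ι) {n : ℕ} (α : UVB n) :
    LL hι (UVB.incl n α) = extM (LL hι α) := by
  let H : Subgroup (UVB n) :=
    { carrier := {α | LL hι (UVB.incl n α) = extM (LL hι α)}
      one_mem' := by
        change LL hι (UVB.incl n 1) = extM (LL hι 1)
        rw [map_one, LL_one, LL_one, extM_zero]
      mul_mem' := by
        intro a b (ha : LL hι (UVB.incl n a) = _) (hb : LL hι (UVB.incl n b) = _)
        change LL hι (UVB.incl n (a * b)) = _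
        rw [map_mul, LL_mul, LL_mul, ha, hb, extM_add, extM_act, io_incl hι]
      inv_mem' := by
        intro a (ha : LL hι (UVB.incl n a) = _)
        change LL hι (UVB.incl n a⁻¹) = _
        rw [map_inv, LL_inv, LL_inv, ha, extM_neg, extM_act, io_incl hι, map_inv] }
  refine generated H ?_ ?_ α
  · intro k hk
    change LL hι (UVB.incl n _) = _
    rw [incl_sigma hk, LL_sigma hι hk, LL_sigma hι (by omega), extM_neg, extM_E]
    rfl
  · intro k hk
    change LL hι (UVB.incl n _) = _
    rw [incl_rho hk, LL_rho hι hk, LL_rho hι (by omega), extM_zero]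

/-- A pure braid with vanishing linking matrix is in the commutator subgroup. -/
theorem mem_comm {s : SecFam} (hs : IsSec s) {ι : IoFam} (hι : IsIo ι) {n : ℕ} {x : UVB n}
    (hx : x ∈ (ι n).ker) (h0 : LL hι x = 0) : x ∈ ⁅(ι n).ker, (ι n).ker⁆ := by
  rw [← PP_eq_ker hs hι] at hx ⊢
  have key : ∀ (x : UVB n) (hx : x ∈ PP s n), Abelianization.of (⟨x, hx⟩ : PP s n) =
      ∏ p : Fin n × Fin n, (Abelianization.of (⟨Lam s n p.1 p.2, Lam_mem s _ _⟩ : PP s n)) ^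
        (LL hι x p.1 p.2) := by
    intro x hx
    induction hx using Subgroup.closure_induction with
    | mem a ha =>
      obtain ⟨⟨i, j⟩, rfl⟩ := ha
      simp only
      by_cases hij : i = j
      · subst hij
        simp only [Lam_self hs, LL_one]
        simp only [Pi.zero_apply, zpow_zero, Finset.prod_const_one]
        exact map_one _
      · rw [Finset.prod_eq_single (i, j)]
        · simp [LL_Lam hs hι hij, E]
        · rintro ⟨a, b⟩ - hab
          rw [LL_Lam hs hι hij, E, if_neg, zpow_zero]
          rintro ⟨rfl, rfl⟩
          exact hab rfl
        · simp
    | one =>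
      simp only [LL_one, Pi.zero_apply, zpow_zero, Finset.prod_const_one]
      exact map_one _
    | mul a b ha hb iha ihb =>
      have e : (⟨a * b, mul_mem ha hb⟩ : PP s n) = ⟨a, ha⟩ * ⟨b, hb⟩ := rfl
      rw [e, map_mul, iha, ihb, ← Finset.prod_mul_distrib]
      simp only [LL_mul, io_PP hs hι ha, act_one, Pi.add_apply, zpow_add]
    | inv a ha iha =>
      have e : (⟨a⁻¹, inv_mem ha⟩ : PP s n) = ⟨a, ha⟩⁻¹ := rfl
      rw [e, map_inv, iha, ← Finset.prod_inv_distrib]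
      simp only [LL_inv, io_PP hs hι ha, inv_one, act_one, Pi.neg_apply, zpow_neg]
  have h1 := key x hx
  simp only [h0, Pi.zero_apply, zpow_zero, Finset.prod_const_one] at h1
  have h2 : (⟨x, hx⟩ : PP s n) ∈ commutator (PP s n) := (QuotientGroup.eq_one_iff _).mp h1
  rw [← Subgroup.map_subtype_commutator]
  exact ⟨_, h2, rfl⟩

end UVBX

/-! ## Part 6: the invariant -/

namespace UVBX

open Equiv

/-- `χ` labels the cycles of `π`. -/
def Good {n k : ℕ} (π : Perm (Fin n)) (χ : Fin n → Fin k) : Prop :=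
  Function.Surjective χ ∧ χ ∘ π = χ ∧
    ∀ h : Fin n → Prop, h ∘ π = h → ∀ i j, χ i = χ j → h i = h j

/-- Block sums. -/
def BS {n k : ℕ} (χ : Fin n → Fin k) (M : Mat n) (A B : Fin k) : ℤ :=
  ∑ i, ∑ j, if χ i = A ∧ χ j = B then M i j else 0

theorem BS_add {n k : ℕ} (χ : Fin n → Fin k) (M N : Mat n) (A B : Fin k) :
    BS χ (M + N) A B = BS χ M A B + BS χ N A B := by
  unfold BS
  rw [← Finset.sum_add_distrib]
  refine Finset.sum_congr rfl fun i _ => ?_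
  rw [← Finset.sum_add_distrib]
  refine Finset.sum_congr rfl fun j _ => ?_
  split_ifs <;> simp

theorem BS_zero {n k : ℕ} (χ : Fin n → Fin k) (A B : Fin k) : BS χ (0 : Mat n) A B = 0 := by
  simp [BS]

theorem BS_neg {n k : ℕ} (χ : Fin n → Fin k) (M : Mat n) (A B : Fin k) :
    BS χ (-M) A B = -BS χ M A B := by
  have := BS_add χ M (-M) A B
  rw [add_neg_cancel, BS_zero] at this
  linarith

theorem BS_act {n k : ℕ} (χ : Fin n → Fin k) (g : Perm (Fin n)) (M : Mat n) (A B : Fin k) :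
    BS χ (act g M) A B = BS (χ ∘ g) M A B := by
  unfold BS
  rw [← Equiv.sum_comp g]
  refine Finset.sum_congr rfl fun i _ => ?_
  rw [← Equiv.sum_comp g]
  refine Finset.sum_congr rfl fun j _ => ?_
  simp [act]

theorem BS_E {n k : ℕ} (χ : Fin n → Fin k) {a b : Fin n} (h : χ a = χ b) {A B : Fin k}
    (hAB : A ≠ B) : BS χ (E a b) A B = 0 := by
  unfold BS
  refine Finset.sum_eq_zero fun i _ => Finset.sum_eq_zero fun j _ => ?_
  split_ifs with h1
  · rw [E, if_neg]
    rintro ⟨rfl, rfl⟩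
    exact hAB (by rw [← h1.1, ← h1.2, h])
  · rfl

theorem BS_ext {n k : ℕ} (χ : Fin (n+1) → Fin k) (M : Mat n) (A B : Fin k) :
    BS χ (extM M) A B = BS (χ ∘ Fin.castSucc) M A B := by
  unfold BS
  simp [Fin.sum_univ_castSucc, extM_cc, extM_cl, extM_l]

/-- The invariant of Markov equivalence. -/
def LInv {ι : IoFam} (hι : IsIo ι) {n : ℕ} (α : UVB n) (k : ℕ) (M : Mat k) : Prop :=
  (n = 0 ∧ k = 1) ∨ (n ≠ 0 ∧ ∃ χ : Fin n → Fin k, Good (ι n α) χ ∧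
    ∀ A B, A ≠ B → BS χ (LL hι α) A B = M A B)

theorem inv_conj_imp {ι : IoFam} (hι : IsIo ι) {n : ℕ} (α γ : UVB n) (k : ℕ) (M : Mat k)
    (h : LInv hι α k M) : LInv hι (γ * α * γ⁻¹) k M := by
  rcases h with h | ⟨hn, χ, ⟨h1, h2, h3⟩, h4⟩
  · exact Or.inl h
  refine Or.inr ⟨hn, χ ∘ ⇑(ι n γ)⁻¹, ⟨?_, ?_, ?_⟩, ?_⟩
  · exact h1.comp (ι n γ)⁻¹.surjective
  · funext i
    have := congrFun h2 ((ι n γ)⁻¹ i)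
    simpa [map_mul] using this
  · intro h hh i j hij
    have := h3 (h ∘ ι n γ) (by
      funext x
      have := congrFun hh (ι n γ x)
      simpa [map_mul] using this) _ _ hij
    simpa using this
  · intro A B hAB
    rw [LL_mul, LL_mul, LL_inv, act_neg, ← act_mul, ← map_inv, ← map_mul, BS_add, BS_add, BS_neg,
      BS_act, BS_act]
    have e1 : (χ ∘ ⇑(ι n γ)⁻¹) ∘ ⇑(ι n (γ * α * γ⁻¹)) = χ ∘ ⇑(ι n γ)⁻¹ := by
      funext i
      have := congrFun h2 ((ι n γ)⁻¹ i)
      simpa [map_mul] using this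
    have e2 : (χ ∘ ⇑(ι n γ)⁻¹) ∘ ⇑(ι n γ) = χ := by
      funext i
      simp
    rw [← map_inv] at e1 e2
    rw [e1, e2, h4 A B hAB]
    ring

theorem inv_conj {ι : IoFam} (hι : IsIo ι) {n : ℕ} (α γ : UVB n) (k : ℕ) (M : Mat k) :
    LInv hι α k M ↔ LInv hι (γ * α * γ⁻¹) k M := by
  refine ⟨inv_conj_imp hι α γ k M, fun h => ?_⟩
  have := inv_conj_imp hι _ γ⁻¹ k M h
  convert this using 1
  group

/-- Extension of a function by duplicating its last value. -/
def extl {X : Type*} {m : ℕ} (f : Fin (m+1) → X) : Fin (m+2) → X :=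
  Fin.lastCases (f (Fin.last m)) f

theorem extl_cs {X : Type*} {m : ℕ} (f : Fin (m+1) → X) (i : Fin (m+1)) :
    extl f i.castSucc = f i := by simp [extl]

theorem extl_last {X : Type*} {m : ℕ} (f : Fin (m+1) → X) :
    extl f (Fin.last (m+1)) = f (Fin.last m) := by simp [extl]

theorem beta_iff {X : Type*} {m : ℕ} (π : Perm (Fin (m+1))) (h : Fin (m+2) → X) :
    h ∘ (emb (m+1) π * swap (Fin.last m).castSucc (Fin.last (m+1)) : Perm (Fin (m+2))) = h ↔
      h ∘ emb (m+1) π = h ∧ h (Fin.last m).castSucc = h (Fin.last (m+1)) := by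
  have sw : h (Fin.last m).castSucc = h (Fin.last (m+1)) →
      ∀ x, h (swap (Fin.last m).castSucc (Fin.last (m+1)) x) = h x := by
    intro e x
    by_cases h1 : x = (Fin.last m).castSucc
    · rw [h1, swap_apply_left, e]
    by_cases h2 : x = Fin.last (m+1)
    · rw [h2, swap_apply_right, e]
    rw [swap_apply_of_ne_of_ne h1 h2]
  constructor
  · intro e
    have e0 : h (Fin.last m).castSucc = h (Fin.last (m+1)) := by
      have := congrFun e (Fin.last m).castSucc
      rw [Function.comp_apply, Perm.mul_apply, swap_apply_left, emb_last] at this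
      exact this.symm
    refine ⟨?_, e0⟩
    funext x
    have := congrFun e (swap (Fin.last m).castSucc (Fin.last (m+1)) x)
    rw [Function.comp_apply, Perm.mul_apply, swap_apply_self, sw e0] at this
    exact this
  · rintro ⟨e, e0⟩
    funext x
    rw [Function.comp_apply, Perm.mul_apply]
    have := congrFun e (swap (Fin.last m).castSucc (Fin.last (m+1)) x)
    rw [Function.comp_apply] at this
    rw [this, sw e0]

theorem extl_inv {X : Type*} {m : ℕ} (π : Perm (Fin (m+1))) (f : Fin (m+1) → X) (h : f ∘ π = f) :
    extl f ∘ (emb (m+1) π * swap (Fin.last m).castSucc (Fin.last (m+1)) : Perm (Fin (m+2))) =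
      extl f := by
  rw [beta_iff]
  refine ⟨?_, by rw [extl_cs, extl_last]⟩
  funext x
  cases x using Fin.lastCases with
  | last => rw [Function.comp_apply, emb_last]
  | cast i => rw [Function.comp_apply, emb_castSucc, extl_cs, extl_cs]; exact congrFun h i

theorem eq_extl {X : Type*} {m : ℕ} (h : Fin (m+2) → X)
    (e : h (Fin.last m).castSucc = h (Fin.last (m+1))) : h = extl (h ∘ Fin.castSucc) := by
  funext x
  cases x using Fin.lastCases with
  | last => rw [extl_last, ← e]; rfl
  | cast i => rw [extl_cs]; rfl

theorem cs_inv {X : Type*} {m : ℕ} (π : Perm (Fin (m+1))) (h : Fin (m+2) → X)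
    (e : h ∘ emb (m+1) π = h) : (h ∘ Fin.castSucc) ∘ π = h ∘ Fin.castSucc := by
  funext i
  have := congrFun e i.castSucc
  rwa [Function.comp_apply, emb_castSucc] at this

theorem good_up {m k : ℕ} (π : Perm (Fin (m+1))) (χ : Fin (m+1) → Fin k) (h : Good π χ) :
    Good (emb (m+1) π * swap (Fin.last m).castSucc (Fin.last (m+1))) (extl χ) := by
  obtain ⟨h1, h2, h3⟩ := h
  refine ⟨?_, extl_inv π χ h2, ?_⟩
  · intro A
    obtain ⟨i, hi⟩ := h1 A
    exact ⟨i.castSucc, by rw [extl_cs, hi]⟩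
  · intro g hg
    obtain ⟨e1, e2⟩ := (beta_iff π g).mp hg
    have e3 := h3 _ (cs_inv π g e1)
    rw [eq_extl g e2]
    intro i j hij
    cases i using Fin.lastCases <;> cases j using Fin.lastCases <;>
      simp only [extl_cs, extl_last] at hij ⊢ <;> exact e3 _ _ hij

theorem good_down {m k : ℕ} (π : Perm (Fin (m+1))) (χ : Fin (m+2) → Fin k)
    (h : Good (emb (m+1) π * swap (Fin.last m).castSucc (Fin.last (m+1))) χ) :
    Good π (χ ∘ Fin.castSucc) ∧ χ = extl (χ ∘ Fin.castSucc) := by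
  obtain ⟨h1, h2, h3⟩ := h
  obtain ⟨e1, e2⟩ := (beta_iff π χ).mp h2
  have e3 := eq_extl χ e2
  refine ⟨⟨?_, cs_inv π χ e1, ?_⟩, e3⟩
  · intro A
    obtain ⟨i, hi⟩ := h1 A
    cases i using Fin.lastCases with
    | last => exact ⟨Fin.last m, by rw [← hi, ← e2]; rfl⟩
    | cast i => exact ⟨i, hi⟩
  · intro g hg i j hij
    have := h3 (extl g) (extl_inv π g hg) i.castSucc j.castSucc hij
    rwa [extl_cs, extl_cs] at this

theorem inv_stab {ι : IoFam} (hι : IsIo ι) {m : ℕ} (α : UVB (m+1)) (τ : UVB (m+2))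
    (h1 : ι (m+2) τ = swap (Fin.last m).castSucc (Fin.last (m+1)))
    (h2 : ∀ (k : ℕ) (χ : Fin (m+2) → Fin k), χ (Fin.last m).castSucc = χ (Fin.last (m+1)) →
      ∀ A B, A ≠ B → BS χ (LL hι τ) A B = 0) (k : ℕ) (M : Mat k) :
    LInv hι α k M ↔ LInv hι (UVB.incl (m+1) α * τ) k M := by
  have hβ : ι (m+2) (UVB.incl (m+1) α * τ) =
      emb (m+1) (ι (m+1) α) * swap (Fin.last m).castSucc (Fin.last (m+1)) := by
    rw [map_mul, io_incl hι, h1]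
  have key : ∀ χ : Fin (m+1) → Fin k, χ ∘ ι (m+1) α = χ → ∀ A B, A ≠ B →
      BS (extl χ) (LL hι (UVB.incl (m+1) α * τ)) A B = BS χ (LL hι α) A B := by
    intro χ hχ A B hAB
    obtain ⟨e1, e2⟩ := (beta_iff _ _).mp (extl_inv _ _ hχ)
    rw [LL_mul, LL_incl, io_incl hι, BS_add, BS_ext, BS_act, e1, h2 k _ e2 A B hAB, add_zero]
    congr 1
    funext i
    rw [Function.comp_apply, extl_cs]
  constructor
  · rintro (⟨h, -⟩ | ⟨-, χ, hg, hM⟩)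
    · omega
    · refine Or.inr ⟨by omega, extl χ, ?_, ?_⟩
      · rw [hβ]; exact good_up _ _ hg
      · intro A B hAB
        rw [key χ hg.2.1 A B hAB, hM A B hAB]
  · rintro (⟨h, -⟩ | ⟨-, χ, hg, hM⟩)
    · omega
    · rw [hβ] at hg
      obtain ⟨g1, g2⟩ := good_down _ _ hg
      refine Or.inr ⟨by omega, _, g1, ?_⟩
      intro A B hAB
      rw [← key _ g1.2.1 A B hAB, ← g2, hM A B hAB]

theorem inv_zero {ι : IoFam} (hι : IsIo ι) (α : UVB 0) (β : UVB 1) (k : ℕ) (M : Mat k) :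
    LInv hι α k M ↔ LInv hι β k M := by
  constructor
  · rintro (⟨-, rfl⟩ | ⟨h, -⟩)
    · refine Or.inr ⟨by omega, id, ⟨Function.surjective_id, ?_, ?_⟩, ?_⟩
      · funext x; exact Subsingleton.elim _ _
      · intro h _ i j _; rw [Subsingleton.elim i j]
      · intro A B hAB; exact absurd (Subsingleton.elim A B) hAB
    · exact absurd rfl h
  · rintro (⟨h, -⟩ | ⟨-, χ, hg, -⟩)
    · omega
    · refine Or.inl ⟨rfl, ?_⟩
      have h1 := Fintype.card_le_of_surjective χ hg.1
      have h2 := (χ 0).2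
      simp only [Fintype.card_fin] at h1
      omega

theorem inv_base {ι : IoFam} (hι : IsIo ι) {a b : Σ n, UVB n} (h : MarkovBase a b) (k : ℕ)
    (M : Mat k) : LInv hι a.2 k M ↔ LInv hι b.2 k M := by
  cases h with
  | conj n α γ => exact inv_conj hι α γ k M
  | stabPos n α =>
    cases n with
    | zero => exact inv_zero hι _ _ k M
    | succ m =>
      refine inv_stab hι α _ (io_sigma hι (n := m+2) (k := m) (by omega)) ?_ k M
      intro k χ hχ A B hAB
      rw [LL_sigma hι (n := m+2) (k := m) (by omega), BS_neg]
      exact neg_eq_zero.mpr (BS_E χ hχ hAB)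
  | stabNeg n α =>
    cases n with
    | zero => exact inv_zero hι _ _ k M
    | succ m =>
      refine inv_stab hι α _ ?_ ?_ k M
      · rw [map_inv, io_sigma hι (n := m+2) (k := m) (by omega), adj, swap_inv]
        rfl
      intro k χ hχ A B hAB
      rw [LL_sigma_inv hι (n := m+2) (k := m) (by omega)]
      exact BS_E χ hχ.symm hAB
  | stabVirt n α =>
    cases n with
    | zero => exact inv_zero hι _ _ k M
    | succ m =>
      refine inv_stab hι α _ (io_rho hι (n := m+2) (k := m) (by omega)) ?_ k M
      intro k χ hχ A B hAB
      rw [LL_rho hι (n := m+2) (k := m) (by omega), BS_zero]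

theorem inv_markov {ι : IoFam} (hι : IsIo ι) {a b : Σ n, UVB n} (h : Markov a b) (k : ℕ)
    (M : Mat k) : LInv hι a.2 k M ↔ LInv hι b.2 k M := by
  induction h with
  | rel x y h => exact inv_base hι h k M
  | refl x => exact Iff.rfl
  | symm x y _ ih => exact ih.symm
  | trans x y z _ _ ih1 ih2 => exact ih1.trans ih2

theorem BS_bij {n k : ℕ} (χ : Fin n → Fin k) (hχ : Function.Injective χ) (M : Mat n)
    (i j : Fin n) : BS χ M (χ i) (χ j) = M i j := by
  unfold BS
  rw [Finset.sum_eq_single i, Finset.sum_eq_single j]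
  · simp
  · intro b _ hb
    rw [if_neg]
    exact fun h => hb (hχ h.2)
  · simp
  · intro b _ hb
    refine Finset.sum_eq_zero fun c _ => ?_
    rw [if_neg]
    exact fun h => hb (hχ h.1)
  · simp

theorem inv_pure {ι : IoFam} (hι : IsIo ι) {n : ℕ} (hn : n ≠ 0) (p : UVB n) (hp : ι n p = 1) :
    LInv hι p n (LL hι p) := by
  refine Or.inr ⟨hn, id, ⟨Function.surjective_id, ?_, ?_⟩, ?_⟩
  · rw [hp]; rfl
  · intro h _ i j hij; rw [show i = j from hij]
  · intro A B _
    exact BS_bij id Function.injective_id _ A B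

theorem inv_pure_inv {ι : IoFam} (hι : IsIo ι) {n : ℕ} (hn : n ≠ 0) (p : UVB n) (hp : ι n p = 1)
    (k : ℕ) (M : Mat k) (h : LInv hι p k M) :
    ∃ χ : Fin n → Fin k, Function.Bijective χ ∧ ∀ i j, i ≠ j → M (χ i) (χ j) = LL hι p i j := by
  rcases h with ⟨h, -⟩ | ⟨-, χ, ⟨h1, h2, h3⟩, h4⟩
  · exact absurd h hn
  have hinj : Function.Injective χ := by
    intro i j hij
    have := h3 (fun x => x = j) (by rw [hp]; rfl) i j hij
    simpa using this
  refine ⟨χ, ⟨hinj, h1⟩, fun i j hij => ?_⟩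
  rw [← h4 _ _ (fun h => hij (hinj h)), BS_bij χ hinj]

theorem card_image_eq {α β γ : Type*} [DecidableEq β] [DecidableEq γ] (S : Finset α)
    (f : α → β) (g : α → γ) (h : ∀ x ∈ S, ∀ y ∈ S, f x = f y ↔ g x = g y) :
    (S.image f).card = (S.image g).card := by
  have h1 : ((S.image fun x => (f x, g x)).image Prod.fst) = S.image f := by
    rw [Finset.image_image]; rfl
  have h2 : ((S.image fun x => (f x, g x)).image Prod.snd) = S.image g := by
    rw [Finset.image_image]; rfl
  rw [← h1, ← h2]
  refine Eq.trans (b := (S.image fun x => (f x, g x)).card) ?_ (Eq.symm ?_) <;>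
    apply Finset.card_image_of_injOn
  · intro a ha b hb hab
    simp only [Finset.coe_image, Set.mem_image, Finset.mem_coe] at ha hb
    obtain ⟨x, hx, rfl⟩ := ha
    obtain ⟨y, hy, rfl⟩ := hb
    exact Prod.ext hab ((h x hx y hy).mp hab)
  · intro a ha b hb hab
    simp only [Finset.coe_image, Set.mem_image, Finset.mem_coe] at ha hb
    obtain ⟨x, hx, rfl⟩ := ha
    obtain ⟨y, hy, rfl⟩ := hb
    exact Prod.ext ((h x hx y hy).mpr hab) hab

theorem numOrbits_eq {n k : ℕ} (π : Perm (Fin n)) (χ : Fin n → Fin k) (h : Good π χ) :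
    numOrbits π = k := by
  classical
  obtain ⟨h1, h2, h3⟩ := h
  set F := Finset.univ.filter fun x => π x = x with hF
  have fixed : ∀ i j, π i = i → χ i = χ j → i = j := by
    intro i j hi hij
    have := h3 (fun x => x = i) (by
      funext x
      simp only [Function.comp_apply]
      exact propext ⟨fun h => π.injective (h.trans hi.symm), fun h => by rw [h, hi]⟩) i j hij
    simpa [eq_comm] using this
  have e1 : (F.image χ).card = F.card := by
    apply Finset.card_image_of_injOn
    intro i hi j hj hij
    exact fixed i j (by simpa [hF] using hi) hij
  have same : ∀ i j, χ i = χ j ↔ π.SameCycle i j := by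
    intro i j
    constructor
    · intro hij
      have := h3 (fun x => π.SameCycle i x) (by
        funext x
        simp only [Function.comp_apply]
        exact propext Perm.sameCycle_apply_right) i j hij
      have h' : π.SameCycle i i = π.SameCycle i j := this
      rw [← h']
    · rintro ⟨z, rfl⟩
      let H : Subgroup (Perm (Fin n)) :=
        { carrier := {g | ∀ x, χ (g x) = χ x}
          one_mem' := fun x => rfl
          mul_mem' := by
            intro a b ha hb x
            rw [Perm.mul_apply, ha, hb]
          inv_mem' := by
            intro a ha x
            rw [← ha (a⁻¹ x)]
            simp }
      have hz : π ^ z ∈ H := H.zpow_mem (show π ∈ H from fun x => congrFun h2 x) z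
      exact (hz i).symm
  have e2 : (π.support.image χ).card = π.cycleType.card := by
    rw [Perm.cycleType_def, Multiset.card_map, Finset.card_val]
    have : π.cycleFactorsFinset = π.support.image π.cycleOf := by
      ext c
      rw [Finset.mem_image]
      constructor
      · intro hc
        obtain ⟨x, hx⟩ := (Perm.mem_cycleFactorsFinset_iff.mp hc).1.nonempty_support
        exact ⟨x, Perm.mem_cycleFactorsFinset_support_le hc hx,
          (Perm.cycle_is_cycleOf hx hc).symm⟩
      · rintro ⟨x, hx, rfl⟩
        exact Perm.cycleOf_mem_cycleFactorsFinset_iff.mpr hx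
    rw [this]
    apply card_image_eq
    intro x hx y hy
    rw [same, Perm.sameCycle_iff_cycleOf_eq_of_mem_support hx hy]
  have e3 : F.image χ ∪ π.support.image χ = Finset.univ := by
    rw [← Finset.image_union]
    have : F ∪ π.support = Finset.univ := by
      ext x
      simp [hF, em]
    rw [this]
    exact Finset.image_univ_of_surjective h1
  have e4 : Disjoint (F.image χ) (π.support.image χ) := by
    rw [Finset.disjoint_left]
    intro A hA hB
    obtain ⟨i, hi, rfl⟩ := Finset.mem_image.mp hA
    obtain ⟨j, hj, hij⟩ := Finset.mem_image.mp hB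
    have hi' : π i = i := by simpa [hF] using hi
    have := fixed i j hi' hij.symm
    subst this
    exact (Perm.mem_support.mp hj) hi'
  have := Finset.card_union_of_disjoint e4
  rw [e3, e1, e2, Finset.card_univ, Fintype.card_fin] at this
  rw [this]
  rfl

end UVBX

/-! ## Part 7: conclusion -/

namespace UVBX

open Equiv

theorem final_fwd {s : SecFam} (hs : IsSec s) {ι : IoFam} (hι : IsIo ι) (a b : Σ n, UVB n)
    (ha : a.1 ≠ 0) (hb : b.1 ≠ 0) (pa : a.2 ∈ (ι a.1).ker) (pb : b.2 ∈ (ι b.1).ker)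
    (h : Markov a b) :
    ∃ (h : b.1 = a.1) (π : Perm (Fin a.1)),
      s a.1 π * a.2 * (s a.1 π)⁻¹ * (cast (congrArg UVB h) b.2)⁻¹ ∈
        ⁅(ι a.1).ker, (ι a.1).ker⁆ := by
  obtain ⟨n, p⟩ := a
  obtain ⟨m, q⟩ := b
  simp only at ha hb pa pb ⊢
  have h1 := (inv_markov hι h n _).mp (inv_pure hι ha p pa)
  obtain ⟨χ, hχ, hM⟩ := inv_pure_inv hι hb q pb n _ h1
  have hmn : m = n := by
    have := Fintype.card_of_bijective hχ
    simpa using this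
  subst hmn
  refine ⟨rfl, (Equiv.ofBijective χ hχ)⁻¹, ?_⟩
  rw [cast_eq]
  have k1 : s m (Equiv.ofBijective χ hχ)⁻¹ * p * (s m (Equiv.ofBijective χ hχ)⁻¹)⁻¹ ∈
      (ι m).ker := (MonoidHom.normal_ker (ι m)).conj_mem p pa _
  refine mem_comm hs hι (mul_mem k1 (inv_mem pb)) ?_
  rw [LL_mul, MonoidHom.mem_ker.mp k1, act_one, LL_inv, MonoidHom.mem_ker.mp pb, inv_one, act_one,
    LL_conj_s hs hι, ← sub_eq_add_neg, sub_eq_zero]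
  funext i j
  by_cases hij : i = j
  · subst hij
    rw [LL_diag, act, LL_diag]
  · rw [← hM i j hij, act, inv_inv]
    rfl

theorem final_bwd {s : SecFam} (hs : IsSec s) {ι : IoFam} (hι : IsIo ι) (a b : Σ n, UVB n)
    (h : ∃ (h : b.1 = a.1) (π : Perm (Fin a.1)),
      s a.1 π * a.2 * (s a.1 π)⁻¹ * (cast (congrArg UVB h) b.2)⁻¹ ∈
        ⁅(ι a.1).ker, (ι a.1).ker⁆) : Markov a b := by
  obtain ⟨n, p⟩ := a
  obtain ⟨m, q⟩ := b
  obtain ⟨hmn, π, hπ⟩ := h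
  simp only at hmn
  subst hmn
  simp only [cast_eq] at hπ
  have h1 := ker_comm_le hs hι _ hπ
  rw [← cls_eq_iff, ← cls_conj (s m π) p]
  apply cls_q
  rw [← mul_inv_eq_one, ← map_inv (QuotientGroup.mk' (NN m)), ← map_mul (QuotientGroup.mk' (NN m))]
  exact (QuotientGroup.eq_one_iff _).mpr h1

end UVBX

/-- the complete invariant ϱ*.  There is a map ϱ* sending each
braid `α ∈ UVB n` (n ≥ 2) to a pure braid `ϱ*(α) ∈ UVP m`, `m` being the number of
orbits of ι(α), such that α ∼ ϱ*(α), and two braids α, β are fused Markov equivalent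
iff ϱ*(α) and ϱ*(β) lie in the same group `UVP m` and are conjugate by an element of
`S_m ≤ UVB m` modulo `[UVP m, UVP m]`. -/
theorem statement11 (ι : ∀ n, UVB n →* Equiv.Perm (Fin n)) (hι : ∀ n, IsIota n (ι n))
    (s : ∀ n, Equiv.Perm (Fin n) →* UVB n) (hs : ∀ n, IsPermSection n (s n)) :
    ∃ f : (Σ n, UVB n) → (Σ n, UVB n),
      (∀ n, 2 ≤ n → ∀ α : UVB n,
        (f ⟨n, α⟩).1 = numOrbits (ι n α) ∧
        (f ⟨n, α⟩).2 ∈ (ι (f ⟨n, α⟩).1).ker ∧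
        Markov ⟨n, α⟩ (f ⟨n, α⟩)) ∧
      (∀ n m, 2 ≤ n → 2 ≤ m → ∀ (α : UVB n) (β : UVB m),
        Markov ⟨n, α⟩ ⟨m, β⟩ ↔
          ∃ (h : (f ⟨m, β⟩).1 = (f ⟨n, α⟩).1) (π : Equiv.Perm (Fin (f ⟨n, α⟩).1)),
            s (f ⟨n, α⟩).1 π * (f ⟨n, α⟩).2 * (s (f ⟨n, α⟩).1 π)⁻¹ *
                (cast (congrArg UVB h) (f ⟨m, β⟩).2)⁻¹ ∈
              ⁅(ι (f ⟨n, α⟩).1).ker, (ι (f ⟨n, α⟩).1).ker⁆) := by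
  have hex : ∀ a : Σ n, UVB n, ∃ b : Σ n, UVB n, a.1 ≠ 0 →
      b.1 ≠ 0 ∧ b.2 ∈ (ι b.1).ker ∧ Markov a b := by
    rintro ⟨n, α⟩
    cases n with
    | zero => exact ⟨⟨0, 1⟩, fun h => absurd rfl h⟩
    | succ n =>
      obtain ⟨m, p, hp, hc⟩ := UVBX.exists_pure (s := s) hs (ι := ι) hι n α
      exact ⟨⟨m+1, p⟩, fun _ => ⟨Nat.succ_ne_zero m, hp, (UVBX.cls_eq_iff α p).mp hc⟩⟩
  choose f hf using hex
  refine ⟨f, ?_, ?_⟩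
  · intro n hn α
    have hn0 : n ≠ 0 := by omega
    obtain ⟨h1, h2, h3⟩ := hf ⟨n, α⟩ hn0
    refine ⟨?_, h2, h3⟩
    have h4 := (UVBX.inv_markov (ι := ι) hι h3 _ _).mpr
      (UVBX.inv_pure (ι := ι) hι h1 (f ⟨n, α⟩).2 h2)
    rcases h4 with ⟨h, -⟩ | ⟨-, χ, hg, -⟩
    · exact absurd h hn0
    · exact (UVBX.numOrbits_eq _ χ hg).symm
  · intro n m hn hm α β
    obtain ⟨a1, a2, a3⟩ := hf ⟨n, α⟩ (show n ≠ 0 by omega)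
    obtain ⟨b1, b2, b3⟩ := hf ⟨m, β⟩ (show m ≠ 0 by omega)
    constructor
    · intro h
      exact UVBX.final_fwd (s := s) hs (ι := ι) hι _ _ a1 b1 a2 b2
        (Relation.EqvGen.trans _ _ _ (Relation.EqvGen.symm _ _ a3)
          (Relation.EqvGen.trans _ _ _ h b3))
    · intro h
      have := UVBX.final_bwd (s := s) hs (ι := ι) hι _ _ h
      exact Relation.EqvGen.trans _ _ _ a3
        (Relation.EqvGen.trans _ _ _ this (Relation.EqvGen.symm _ _ b3))
end

section
/- Let n ≥ 2. The abelianization UVP_n/[UVP_n, UVP_n] is a free abelian group of rank n(n−1), freely generated by the images of the elements λ_{i,j}, 1 ≤ i ≠ j ≤ n. -/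
/-! ## Statement 14 -/

private lemma val_add_one_ne {n : ℕ} {a b : Fin n} (h : a ≠ b) :
    a.val + 1 ≠ b.val + 1 := by
  intro hc
  exact h (Fin.ext (by omega))

namespace UVBProof

open UVB

section relations
variable {n : ℕ}

lemma mk_eq {a b : FreeGroup (UVBGen n)} (h : a * b⁻¹ ∈ uvbRels n) :
    PresentedGroup.mk (uvbRels n) a = PresentedGroup.mk (uvbRels n) b := by
  have := PresentedGroup.one_of_mem h
  rw [map_mul, map_inv] at this
  exact mul_inv_eq_one.mp this

lemma sigma_eq (i : Fin (n - 1)) :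
    sigma n (i.val + 1) = PresentedGroup.mk (uvbRels n) (UVBGen.sg i) := by
  unfold sigma
  rw [dif_pos ⟨by omega, by omega⟩]
  rfl

lemma rho_eq (i : Fin (n - 1)) :
    rho n (i.val + 1) = PresentedGroup.mk (uvbRels n) (UVBGen.rg i) := by
  unfold rho
  rw [dif_pos ⟨by omega, by omega⟩]
  rfl

lemma exists_fin {k : ℕ} (h1 : 1 ≤ k) (h2 : k ≤ n - 1) : ∃ i : Fin (n - 1), k = i.val + 1 :=
  ⟨⟨k - 1, by omega⟩, by simp; omega⟩

lemma rho_sq (k : ℕ) : rho n k * rho n k = 1 := by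
  by_cases h : 1 ≤ k ∧ k ≤ n - 1
  · obtain ⟨i, rfl⟩ := exists_fin h.1 h.2
    rw [rho_eq, ← map_mul]
    exact PresentedGroup.one_of_mem (Or.inr (Or.inr ⟨i, rfl⟩))
  · unfold rho
    rw [dif_neg h, one_mul]

lemma rho_inv (k : ℕ) : (rho n k)⁻¹ = rho n k :=
  inv_eq_of_mul_eq_one_left (rho_sq k)

lemma rho_comm {k l : ℕ} (h : k + 2 ≤ l ∨ l + 2 ≤ k) : Commute (rho n k) (rho n l) := by
  by_cases hk : 1 ≤ k ∧ k ≤ n - 1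
  · by_cases hl : 1 ≤ l ∧ l ≤ n - 1
    · obtain ⟨i, rfl⟩ := exists_fin hk.1 hk.2
      obtain ⟨j, rfl⟩ := exists_fin hl.1 hl.2
      rw [rho_eq, rho_eq, commute_iff_eq, ← map_mul, ← map_mul]
      exact mk_eq (Or.inr (Or.inl ⟨i, j, by omega, Or.inr (Or.inl rfl)⟩))
    · have : rho n l = 1 := by unfold rho; rw [dif_neg hl]
      rw [this]; exact Commute.one_right _
  · have : rho n k = 1 := by unfold rho; rw [dif_neg hk]
    rw [this]; exact Commute.one_left _

lemma sigma_rho_comm {k l : ℕ} (h : k + 2 ≤ l ∨ l + 2 ≤ k) : Commute (sigma n k) (rho n l) := by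
  by_cases hk : 1 ≤ k ∧ k ≤ n - 1
  · by_cases hl : 1 ≤ l ∧ l ≤ n - 1
    · obtain ⟨i, rfl⟩ := exists_fin hk.1 hk.2
      obtain ⟨j, rfl⟩ := exists_fin hl.1 hl.2
      rw [rho_eq, sigma_eq, commute_iff_eq, ← map_mul, ← map_mul]
      exact mk_eq (Or.inr (Or.inl ⟨i, j, by omega, Or.inr (Or.inr rfl)⟩))
    · have : rho n l = 1 := by unfold rho; rw [dif_neg hl]
      rw [this]; exact Commute.one_right _
  · have : sigma n k = 1 := by unfold sigma; rw [dif_neg hk]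
    rw [this]; exact Commute.one_left _

lemma rho_braid {k : ℕ} (h1 : 1 ≤ k) (h2 : k + 1 ≤ n - 1) :
    rho n k * rho n (k + 1) * rho n k = rho n (k + 1) * rho n k * rho n (k + 1) := by
  obtain ⟨i, rfl⟩ := exists_fin h1 (by omega : k ≤ n - 1)
  obtain ⟨j, hj⟩ := exists_fin (by omega) h2
  rw [hj, rho_eq, rho_eq]
  simp only [← map_mul]
  exact mk_eq (Or.inl ⟨i, j, by omega, Or.inr (Or.inl rfl)⟩)

lemma rho_mixed {k : ℕ} (h1 : 1 ≤ k) (h2 : k + 1 ≤ n - 1) :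
    rho n k * rho n (k + 1) * sigma n k = sigma n (k + 1) * rho n k * rho n (k + 1) := by
  obtain ⟨i, rfl⟩ := exists_fin h1 (by omega : k ≤ n - 1)
  obtain ⟨j, hj⟩ := exists_fin (by omega) h2
  rw [hj, rho_eq, rho_eq, sigma_eq, sigma_eq]
  simp only [← map_mul]
  exact mk_eq (Or.inl ⟨i, j, by omega, Or.inr (Or.inr (Or.inl rfl))⟩)

end relations

section Bwords
variable {n : ℕ}

lemma B_self (i : ℕ) : B n i i = 1 := by simp [B]

lemma B_succ {i j : ℕ} (h : i ≤ j) : B n i (j + 1) = rho n j * B n i j := by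
  unfold B
  rw [if_pos (by omega)]
  obtain ⟨d, rfl⟩ := Nat.exists_eq_add_of_le h
  rw [show i + d + 1 - i = d + 1 by omega, show i + d - i = d by omega, List.range'_concat]
  by_cases hd : d = 0
  · subst hd; simp
  · rw [if_pos (by omega)]; simp

lemma B_pred {i j : ℕ} (h : i < j) : B n i j = B n (i + 1) j * rho n i := by
  induction j, h using Nat.le_induction with
  | base => rw [B_succ le_rfl, B_self, B_self]; simp
  | succ j hj ih => rw [B_succ (by omega), B_succ (by omega), ih, mul_assoc]

lemma B_comm {i j k : ℕ} (hij : i ≤ j) (h : k + 2 ≤ i ∨ j + 1 ≤ k) :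
    Commute (rho n k) (B n i j) := by
  induction j, hij using Nat.le_induction with
  | base => rw [B_self]; exact Commute.one_right _
  | succ j hj ih =>
    rw [B_succ hj]
    exact (rho_comm (by omega)).mul_right (ih (by omega))

lemma B_shift {i j k : ℕ} (h1 : 1 ≤ i) (hik : i ≤ k) (hkj : k + 2 ≤ j) (hj : j ≤ n) :
    rho n k * B n i j = B n i j * rho n (k + 1) := by
  induction j, hkj using Nat.le_induction with
  | base =>
    rw [B_succ (by omega), B_succ hik, ← mul_assoc, ← mul_assoc, rho_braid (by omega) (by omega)]
    have : Commute (rho n (k + 1)) (B n i k) := B_comm hik (by omega)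
    simp only [mul_assoc, this.eq]
  | succ j hj' ih =>
    rw [B_succ (by omega), ← mul_assoc, (rho_comm (by omega) : Commute (rho n k) (rho n j)).eq,
      mul_assoc, ih (by omega), mul_assoc]

end Bwords

section coxeter
variable {n : ℕ}

/-- The subgroup generated by `ρ_1, …, ρ_{k-1}`. -/
def R (n k : ℕ) : Subgroup (UVB n) :=
  Subgroup.closure {x | ∃ m, 1 ≤ m ∧ m < k ∧ x = rho n m}

lemma rho_mem_R {m k : ℕ} (h1 : 1 ≤ m) (h2 : m < k) : rho n m ∈ R n k :=
  Subgroup.subset_closure ⟨m, h1, h2, rfl⟩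

lemma R_decomp {k : ℕ} (hk : k + 1 ≤ n) {x : UVB n} (hx : x ∈ R n (k + 1)) :
    ∃ u ∈ R n k, ∃ i, 1 ≤ i ∧ i ≤ k + 1 ∧ x = u * B n i (k + 1) := by
  have step : ∀ x : UVB n, ∀ m, 1 ≤ m → m < k + 1 →
      (∃ u ∈ R n k, ∃ i, 1 ≤ i ∧ i ≤ k + 1 ∧ x = u * B n i (k + 1)) →
      (∃ u ∈ R n k, ∃ i, 1 ≤ i ∧ i ≤ k + 1 ∧ x * rho n m = u * B n i (k + 1)) := by
    rintro x m h1 h2 ⟨u, hu, i, hi1, hi2, rfl⟩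
    rcases lt_trichotomy m i with h | h | h
    · by_cases hm : m + 1 = i
      · subst hm
        exact ⟨u, hu, m, h1, by omega, by rw [B_pred (i := m) (by omega), mul_assoc]⟩
      · refine ⟨u * rho n m, mul_mem hu (rho_mem_R h1 (by omega)), i, hi1, hi2, ?_⟩
        rw [mul_assoc, mul_assoc, (B_comm hi2 (by omega) : Commute (rho n m) _).eq]
    · subst h
      refine ⟨u, hu, m + 1, by omega, by omega, ?_⟩
      rw [B_pred (i := m) (by omega), mul_assoc, mul_assoc, rho_sq, mul_one]
    · obtain ⟨m, rfl⟩ : ∃ m', m = m' + 1 := ⟨m - 1, by omega⟩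
      refine ⟨u * rho n m, mul_mem hu (rho_mem_R (by omega) (by omega)), i, hi1, hi2, ?_⟩
      rw [mul_assoc, mul_assoc, B_shift hi1 (by omega) (by omega) hk]
  induction hx using Subgroup.closure_induction_right with
  | one => exact ⟨1, one_mem _, k + 1, by omega, le_rfl, by rw [B_self, one_mul]⟩
  | mul_right x hx y hy ih =>
    obtain ⟨m, h1, h2, rfl⟩ := hy
    exact step _ m h1 h2 ih
  | mul_inv_cancel x hx y hy ih =>
    obtain ⟨m, h1, h2, rfl⟩ := hy
    rw [rho_inv]
    exact step _ m h1 h2 ih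

variable {ι : UVB n →* Equiv.Perm (Fin n)}

lemma iota_B (hι : IsIota n ι) {i j : ℕ} (h1 : 1 ≤ i) (hij : i ≤ j) (hj : j ≤ n) :
    ι (B n i j) ⟨i - 1, by omega⟩ = ⟨j - 1, by omega⟩ := by
  induction j, hij using Nat.le_induction with
  | base => rw [B_self]; simp
  | succ j hij ih =>
    rw [B_succ hij, map_mul, Equiv.Perm.mul_apply, ih (by omega), (hι j (by omega) (by omega)).2,
      Equiv.swap_apply_left]
    rfl

lemma iota_R (hι : IsIota n ι) {k : ℕ} {x : UVB n} (hx : x ∈ R n k)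
    (a : Fin n) (ha : k ≤ a.val) : ι x a = a := by
  have key : R n k ≤ (MulAction.stabilizer (Equiv.Perm (Fin n)) a).comap ι := by
    unfold R
    rw [Subgroup.closure_le]
    rintro y ⟨m, h1, h2, rfl⟩
    simp only [Subgroup.coe_comap, Set.mem_preimage, SetLike.mem_coe, MulAction.mem_stabilizer_iff]
    rw [(hι m h1 (by omega)).2]
    apply Equiv.swap_apply_of_ne_of_ne <;> (rw [Ne, Fin.ext_iff]; simp; omega)
  exact key hx

lemma R_inj (hι : IsIota n ι) {k : ℕ} (hk : k ≤ n) {x : UVB n} (hx : x ∈ R n k)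
    (h : ι x = 1) : x = 1 := by
  induction k generalizing x with
  | zero =>
    have : R n 0 = ⊥ := by
      unfold R
      rw [Subgroup.closure_eq_bot_iff]
      rintro y ⟨m, h1, h2, rfl⟩
      omega
    rw [this] at hx
    exact Subgroup.mem_bot.mp hx
  | succ k ih =>
    obtain ⟨u, hu, i, hi1, hi2, rfl⟩ := R_decomp hk hx
    have e : ι (u * B n i (k + 1)) ⟨i - 1, by omega⟩ = ⟨k, by omega⟩ := by
      rw [map_mul, Equiv.Perm.mul_apply, iota_B hι hi1 hi2 hk]
      exact iota_R hι hu _ (by simp)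
    rw [h] at e
    have : i - 1 = k := by simpa using e
    obtain rfl : i = k + 1 := by omega
    rw [B_self, mul_one] at h ⊢
    exact ih (by omega) hu h

end coxeter

section lambdas
variable {n : ℕ}

/-- The elements `ρ_i σ_i⁻¹`. -/
def l (n i : ℕ) : UVB n := rho n i * (sigma n i)⁻¹

lemma prod_rev_inv (L : List ℕ) :
    ((L.reverse.map (rho n)).prod)⁻¹ = (L.map (rho n)).prod := by
  induction L with
  | nil => simp
  | cons a L ih => 
    rw [List.reverse_cons, List.map_append, List.prod_append, mul_inv_rev, ih]
    simp [rho_inv]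

lemma B_eq (i j : ℕ) : B n (i + 1) j =
    ((List.range' (i + 1) (j - 1 - i)).reverse.map (rho n)).prod := by
  unfold B
  rw [show j - (i + 1) = j - 1 - i by omega]
  split_ifs with h
  · rfl
  · rw [show j - 1 - i = 0 by omega]; simp

lemma lam_lt {i j : ℕ} (h : i < j) :
    lam n i j = B n (i + 1) j * l n i * (B n (i + 1) j)⁻¹ := by
  unfold lam
  rw [if_pos h, B_eq, prod_rev_inv]
  rfl

lemma lam_gt {i j : ℕ} (h : i < j) :
    lam n j i = B n (i + 1) j * (rho n i * l n i * rho n i) * (B n (i + 1) j)⁻¹ := by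
  unfold lam
  rw [if_neg (by omega), if_pos h, B_eq, prod_rev_inv, l, ← mul_assoc (rho n i), rho_sq, one_mul]

/-- The set of all `λ_{i,j}`. -/
def Lam (n : ℕ) : Set (UVB n) :=
  {x | ∃ i j, 1 ≤ i ∧ i ≤ n ∧ 1 ≤ j ∧ j ≤ n ∧ i ≠ j ∧ x = lam n i j}

lemma Lam_of_l {i j : ℕ} (h1 : 1 ≤ i) (h : i < j) (hj : j ≤ n) :
    MulAut.conj (B n (i + 1) j) (l n i) ∈ Lam n :=
  ⟨i, j, h1, by omega, by omega, hj, by omega, by rw [lam_lt h]; rfl⟩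

lemma Lam_of_rl {i j : ℕ} (h1 : 1 ≤ i) (h : i < j) (hj : j ≤ n) :
    MulAut.conj (B n (i + 1) j * rho n i) (l n i) ∈ Lam n :=
  ⟨j, i, by omega, by omega, by omega, by omega, by omega, by
    rw [lam_gt h]; simp [MulAut.conj_apply, rho_inv, mul_assoc]⟩

lemma Lam_cases {x : UVB n} (hx : x ∈ Lam n) : ∃ i j, 1 ≤ i ∧ i < j ∧ j ≤ n ∧
    (x = MulAut.conj (B n (i + 1) j) (l n i) ∨
      x = MulAut.conj (B n (i + 1) j * rho n i) (l n i)) := by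
  obtain ⟨i, j, hi1, hi2, hj1, hj2, hij, rfl⟩ := hx
  rcases Nat.lt_or_gt_of_ne hij with h | h
  · exact ⟨i, j, hi1, h, hj2, Or.inl (by rw [lam_lt h]; rfl)⟩
  · exact ⟨j, i, hj1, h, hi2, Or.inr (by
      rw [lam_gt h]; simp [MulAut.conj_apply, rho_inv, mul_assoc])⟩

lemma l_comm {i k : ℕ} (h : i + 2 ≤ k ∨ k + 2 ≤ i) : MulAut.conj (rho n k) (l n i) = l n i := by
  have : Commute (rho n k) (l n i) :=
    (rho_comm (by omega)).mul_right (sigma_rho_comm h).symm.inv_right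
  rw [MulAut.conj_apply, this.eq, mul_inv_cancel_right]

lemma l_shift {i : ℕ} (h1 : 1 ≤ i) (h2 : i + 1 ≤ n - 1) :
    MulAut.conj (rho n i * rho n (i + 1)) (l n i) = l n (i + 1) := by
  have a := rho_braid h1 h2
  have b := rho_mixed h1 h2
  have b' : rho n i * rho n (i + 1) * (sigma n i)⁻¹ =
      (sigma n (i + 1))⁻¹ * (rho n i * rho n (i + 1)) := by
    rw [mul_inv_eq_iff_eq_mul, mul_assoc, eq_inv_mul_iff_mul_eq, ← mul_assoc, b]
  rw [MulAut.conj_apply, mul_inv_eq_iff_eq_mul]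
  unfold l
  rw [← mul_assoc, a, mul_assoc, mul_assoc, ← mul_assoc (rho n i), b', mul_assoc]

lemma l_shift' {i : ℕ} (h1 : 1 ≤ i) (h2 : i + 1 ≤ n - 1) :
    MulAut.conj (rho n i) (l n (i + 1)) = MulAut.conj (rho n (i + 1)) (l n i) := by
  rw [← l_shift h1 h2, ← MulAut.mul_apply, ← map_mul, ← mul_assoc, rho_sq, one_mul]

lemma Lam_conj {k : ℕ} (hk1 : 1 ≤ k) (hk2 : k ≤ n - 1) {x : UVB n} (hx : x ∈ Lam n) :
    MulAut.conj (rho n k) x ∈ Lam n := by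
  obtain ⟨i, j, hi, hij, hj, hx⟩ := Lam_cases hx
  have hx : ∃ t, x = MulAut.conj (B n (i + 1) j * t) (l n i) ∧ (t = 1 ∨ t = rho n i) := by
    rcases hx with rfl | rfl
    · exact ⟨1, by simp, Or.inl rfl⟩
    · exact ⟨_, rfl, Or.inr rfl⟩
  obtain ⟨t, rfl, ht⟩ := hx
  have mem : ∀ i j t, 1 ≤ i → i < j → j ≤ n → (t = 1 ∨ t = rho n i) →
      MulAut.conj (B n (i + 1) j * t) (l n i) ∈ Lam n := by
    rintro i j t h1 h2 h3 (rfl | rfl)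
    · rw [mul_one]; exact Lam_of_l h1 h2 h3
    · exact Lam_of_rl h1 h2 h3
  rw [← MulAut.mul_apply, ← map_mul]
  -- the case where `ρ_k` passes through `B`, becoming `ρ_m`, far from `i`
  have far : ∀ m, rho n k * B n (i + 1) j = B n (i + 1) j * rho n m →
      (i + 2 ≤ m ∨ m + 2 ≤ i) →
      MulAut.conj (rho n k * (B n (i + 1) j * t)) (l n i) ∈ Lam n := by
    intro m hm hm'
    have : Commute (rho n m) t := by
      rcases ht with rfl | rfl
      · exact Commute.one_right _
      · exact rho_comm (by omega)
    rw [← mul_assoc, hm, mul_assoc, this.eq, ← mul_assoc, map_mul, MulAut.mul_apply, l_comm hm']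
    exact mem _ _ _ hi hij hj ht
  by_cases c1 : j < k
  · exact far k (B_comm hij (by omega)).eq (by omega)
  by_cases c2 : k = j
  · subst c2
    rw [← mul_assoc, ← B_succ hij]
    exact mem _ _ _ hi (by omega) (by omega) ht
  by_cases c3 : k + 1 = j
  · subst c3
    by_cases c4 : i = k
    · subst c4
      rw [B_self, one_mul]
      rcases ht with rfl | rfl
      · have := mem i (i + 1) (rho n i) hi hij hj (Or.inr rfl)
        rwa [B_self, one_mul, ← mul_one (rho n i)] at this
      · have := mem i (i + 1) 1 hi hij hj (Or.inl rfl)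
        rwa [B_self, one_mul, ← rho_sq i] at this
    · rw [B_succ (by omega), mul_assoc, ← mul_assoc, rho_sq, one_mul]
      exact mem _ _ _ hi (by omega) (by omega) ht
  by_cases c5 : i < k
  · exact far (k + 1) (B_shift (by omega) (by omega) (by omega) hj) (by omega)
  by_cases c6 : k = i
  · subst c6
    have e : rho n k * (B n (k + 1) j * t) = B n (k + 2) j * (rho n k * rho n (k + 1) * t) := by
      rw [B_pred (by omega : k + 1 < j), ← mul_assoc, ← mul_assoc,
        (B_comm (by omega) (by omega) : Commute (rho n k) (B n (k + 1 + 1) j)).eq]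
      simp only [mul_assoc]
    rw [e]
    have e2 : ∃ t', (t' = 1 ∨ t' = rho n (k + 1)) ∧
        rho n k * rho n (k + 1) * t = t' * (rho n k * rho n (k + 1)) := by
      rcases ht with rfl | rfl
      · exact ⟨1, Or.inl rfl, by simp⟩
      · exact ⟨_, Or.inr rfl, by rw [rho_braid hi (by omega), mul_assoc]⟩
    obtain ⟨t', ht', e2⟩ := e2
    rw [e2, ← mul_assoc, map_mul, MulAut.mul_apply, l_shift hi (by omega)]
    exact mem _ _ _ (by omega) (by omega) hj ht'
  by_cases c7 : k + 1 = i
  · subst c7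
    rw [← mul_assoc, (B_comm hij (by omega) : Commute (rho n k) (B n (k + 1 + 1) j)).eq]
    rcases ht with rfl | rfl
    · rw [mul_one, map_mul, MulAut.mul_apply, l_shift' hk1 (by omega), ← MulAut.mul_apply,
        ← map_mul, ← B_pred (by omega)]
      exact Lam_of_l hk1 (by omega) hj
    · have e : MulAut.conj (rho n k * rho n (k + 1)) (l n (k + 1)) =
          MulAut.conj (rho n (k + 1) * rho n k) (l n k) := by
        rw [← l_shift hk1 (by omega), ← MulAut.mul_apply, ← map_mul]
        congr 2
        calc _ = rho n k * rho n (k + 1) * rho n k * rho n (k + 1) := by simp only [mul_assoc]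
          _ = _ := by rw [rho_braid hk1 (by omega), mul_assoc, rho_sq, mul_one]
      rw [mul_assoc, map_mul, MulAut.mul_apply, e, ← MulAut.mul_apply, ← map_mul, ← mul_assoc,
        ← B_pred (by omega)]
      exact Lam_of_rl hk1 (by omega) hj
  · exact far k (B_comm hij (by omega)).eq (by omega)

lemma closure_Lam_conj {r : UVB n} (hr : r ∈ R n n) {x : UVB n}
    (hx : x ∈ Subgroup.closure (Lam n)) : MulAut.conj r x ∈ Subgroup.closure (Lam n) := by
  have step : ∀ k, 1 ≤ k → k < n → ∀ x ∈ Subgroup.closure (Lam n),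
      MulAut.conj (rho n k) x ∈ Subgroup.closure (Lam n) := by
    intro k h1 h2 x hx
    have : Subgroup.closure (Lam n) ≤
        (Subgroup.closure (Lam n)).comap (MulAut.conj (rho n k)).toMonoidHom := by
      rw [Subgroup.closure_le]
      intro y hy
      exact Subgroup.subset_closure (Lam_conj h1 (by omega) hy)
    exact this hx
  induction hr using Subgroup.closure_induction_right generalizing x with
  | one => simpa using hx
  | mul_right a ha y hy ih =>
    obtain ⟨m, h1, h2, rfl⟩ := hy
    rw [map_mul, MulAut.mul_apply]
    exact ih (step m h1 h2 x hx)
  | mul_inv_cancel a ha y hy ih =>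
    obtain ⟨m, h1, h2, rfl⟩ := hy
    rw [rho_inv, map_mul, MulAut.mul_apply]
    exact ih (step m h1 h2 x hx)

lemma l_mem {i : ℕ} (h1 : 1 ≤ i) (h2 : i < n) : l n i ∈ Subgroup.closure (Lam n) := by
  have := Lam_of_l (n := n) h1 (Nat.lt_succ_self i) h2
  rw [Nat.succ_eq_add_one, B_self, map_one, MulAut.one_apply] at this
  exact Subgroup.subset_closure this

lemma decomp (g : UVB n) : ∃ x ∈ Subgroup.closure (Lam n), ∃ r ∈ R n n, g = x * r := by
  have hR : ∀ s ∈ R n n, ∀ g : UVB n,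
      (∃ x ∈ Subgroup.closure (Lam n), ∃ r ∈ R n n, g = x * r) →
      ∃ x ∈ Subgroup.closure (Lam n), ∃ r ∈ R n n, s * g = x * r := by
    rintro s hs g ⟨x, hx, r, hr, rfl⟩
    exact ⟨_, closure_Lam_conj hs hx, s * r, mul_mem hs hr, by
      simp [MulAut.conj_apply, mul_assoc]⟩
  have hN : ∀ y ∈ Subgroup.closure (Lam n), ∀ g : UVB n,
      (∃ x ∈ Subgroup.closure (Lam n), ∃ r ∈ R n n, g = x * r) →
      ∃ x ∈ Subgroup.closure (Lam n), ∃ r ∈ R n n, y * g = x * r := by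
    rintro y hy g ⟨x, hx, r, hr, rfl⟩
    exact ⟨_, mul_mem hy hx, r, hr, by simp [mul_assoc]⟩
  have hg : g ∈ Subgroup.closure (Set.range (PresentedGroup.of (rels := uvbRels n))) := by
    rw [PresentedGroup.closure_range_of]; trivial
  induction hg using Subgroup.closure_induction_left with
  | one => exact ⟨1, one_mem _, 1, one_mem _, by simp⟩
  | mul_left y hy g hg ih =>
    obtain ⟨i | i, rfl⟩ := hy
    · have e : (PresentedGroup.of (Sum.inl i) : UVB n) =
          (l n (i.val + 1))⁻¹ * rho n (i.val + 1) := by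
        rw [l, sigma_eq]; simp; rfl
      rw [e, mul_assoc]
      exact hN _ (inv_mem (l_mem (by omega) (by omega))) _
        (hR _ (rho_mem_R (by omega) (by omega)) _ ih)
    · have e : (PresentedGroup.of (Sum.inr i) : UVB n) = rho n (i.val + 1) := by
        rw [rho_eq]; rfl
      rw [e]
      exact hR _ (rho_mem_R (by omega) (by omega)) _ ih
  | inv_mul_cancel y hy g hg ih =>
    obtain ⟨i | i, rfl⟩ := hy
    · have e : (PresentedGroup.of (Sum.inl i) : UVB n)⁻¹ =
          rho n (i.val + 1) * l n (i.val + 1) := by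
        rw [l, ← mul_assoc, rho_sq, one_mul, sigma_eq]; rfl
      rw [e, mul_assoc]
      exact hR _ (rho_mem_R (by omega) (by omega)) _
        (hN _ (l_mem (by omega) (by omega)) _ ih)
    · have e : (PresentedGroup.of (Sum.inr i) : UVB n)⁻¹ = rho n (i.val + 1) := by
        rw [← rho_inv, rho_eq]; rfl
      rw [e]
      exact hR _ (rho_mem_R (by omega) (by omega)) _ ih

lemma ker_le {ι : UVB n →* Equiv.Perm (Fin n)} (hι : IsIota n ι) (hL : Lam n ⊆ ι.ker) :
    ι.ker ≤ Subgroup.closure (Lam n) := by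
  intro g hg
  obtain ⟨x, hx, r, hr, rfl⟩ := decomp g
  have hx' : ι x = 1 := (Subgroup.closure_le _).mpr hL hx
  have : ι r = 1 := by
    have h : ι (x * r) = 1 := hg
    rwa [map_mul, hx', one_mul] at h
  rw [R_inj hι le_rfl hr this, mul_one]
  exact hx

end lambdas

section semidirect

/-- The free abelian group on ordered pairs, written multiplicatively. -/
abbrev A (α : Type) := Multiplicative (FreeAbelianGroup (α × α))

/-- Permutations act on the free abelian group on ordered pairs. -/
def act (α : Type) : Equiv.Perm α →* MulAut (A α) where
  toFun π := AddEquiv.toMultiplicative (FreeAbelianGroup.equivOfEquiv (π.prodCongr π))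
  map_one' := by
    ext x
    change Multiplicative.ofAdd (FreeAbelianGroup.map _ x.toAdd) = x
    exact congrArg Multiplicative.ofAdd (FreeAbelianGroup.map_id_apply x.toAdd)
  map_mul' π τ := by
    ext x
    change Multiplicative.ofAdd (FreeAbelianGroup.map _ x.toAdd) =
      Multiplicative.ofAdd (FreeAbelianGroup.map _ (FreeAbelianGroup.map _ x.toAdd))
    rw [← FreeAbelianGroup.map_comp_apply]
    rfl

variable {α : Type} [DecidableEq α]

/-- Basis elements. -/
def bas {α : Type} (a b : α) : A α := Multiplicative.ofAdd (FreeAbelianGroup.of (a, b))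

lemma act_bas {α : Type} (π : Equiv.Perm α) (a b : α) :
    act α π (bas a b) = bas (π a) (π b) := by
  change Multiplicative.ofAdd (FreeAbelianGroup.map _ (FreeAbelianGroup.of (a, b))) = _
  rw [FreeAbelianGroup.map_of_apply]
  rfl

/-- Image of `σ`. -/
def Sg (a b : α) : A α ⋊[act α] Equiv.Perm α := ⟨(bas a b)⁻¹, Equiv.swap a b⟩

/-- Image of `ρ`. -/
def Rg (a b : α) : A α ⋊[act α] Equiv.Perm α := ⟨1, Equiv.swap a b⟩

lemma swap_braid {a b c : α} (hab : a ≠ b) (hbc : b ≠ c) (hac : a ≠ c) :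
    Equiv.swap a b * Equiv.swap b c * Equiv.swap a b =
      Equiv.swap b c * Equiv.swap a b * Equiv.swap b c := by
  ext x
  simp only [Equiv.Perm.mul_apply, Equiv.swap_apply_def]
  grind

lemma swap_comm4 {a b c d : α} (hac : a ≠ c) (had : a ≠ d) (hbc : b ≠ c) (hbd : b ≠ d) :
    Equiv.swap a b * Equiv.swap c d = Equiv.swap c d * Equiv.swap a b := by
  ext x
  simp only [Equiv.Perm.mul_apply, Equiv.swap_apply_def]
  grind

lemma comm2 (x y : A α) : x * y = y * x := mul_comm x y

lemma comm3 (x y z : A α) : x * y * z = z * y * x := by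
  rw [mul_comm, mul_comm x y, mul_assoc]

lemma rels3 {a b c : α} (hab : a ≠ b) (hbc : b ≠ c) (hac : a ≠ c) :
    Sg a b * Sg b c * Sg a b = Sg b c * Sg a b * Sg b c ∧
    Rg a b * Rg b c * Rg a b = Rg b c * Rg a b * Rg b c ∧
    Rg a b * Rg b c * Sg a b = Sg b c * Rg a b * Rg b c ∧
    Rg a b * Sg b c * Sg a b = Sg b c * Sg a b * Rg b c ∧
    Rg b c * Sg a b * Sg b c = Sg a b * Sg b c * Rg a b := by
  have s1 : Equiv.swap a b c = c := Equiv.swap_apply_of_ne_of_ne hac.symm hbc.symm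
  have s2 : Equiv.swap b c a = a := Equiv.swap_apply_of_ne_of_ne hab hac
  refine ⟨?_, ?_, ?_, ?_, ?_⟩ <;> refine SemidirectProduct.ext ?_ ?_
  all_goals
    simp only [Sg, Rg, SemidirectProduct.mul_left, SemidirectProduct.mul_right,
      swap_braid hab hbc hac, map_mul, map_inv, map_one, MulAut.mul_apply, act_bas,
      Equiv.swap_apply_left, Equiv.swap_apply_right, s1, s2, one_mul, mul_one]
  all_goals first | exact comm2 _ _ | exact comm3 _ _ _

lemma rels4 {a b c d : α} (hac : a ≠ c) (had : a ≠ d) (hbc : b ≠ c) (hbd : b ≠ d) :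
    Sg a b * Sg c d = Sg c d * Sg a b ∧
    Rg a b * Rg c d = Rg c d * Rg a b ∧
    Sg a b * Rg c d = Rg c d * Sg a b := by
  have s1 : Equiv.swap a b c = c := Equiv.swap_apply_of_ne_of_ne hac.symm hbc.symm
  have s2 : Equiv.swap a b d = d := Equiv.swap_apply_of_ne_of_ne had.symm hbd.symm
  have s3 : Equiv.swap c d a = a := Equiv.swap_apply_of_ne_of_ne hac had
  have s4 : Equiv.swap c d b = b := Equiv.swap_apply_of_ne_of_ne hbc hbd
  refine ⟨?_, ?_, ?_⟩ <;> refine SemidirectProduct.ext ?_ ?_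
  all_goals
    simp only [Sg, Rg, SemidirectProduct.mul_left, SemidirectProduct.mul_right,
      swap_comm4 hac had hbc hbd, map_inv, map_one, act_bas,
      s1, s2, s3, s4, one_mul, mul_one]
  all_goals first | exact comm2 _ _ | exact comm3 _ _ _

lemma rels2 (a b : α) : Rg a b * Rg a b = 1 := by
  refine SemidirectProduct.ext ?_ ?_ <;> simp [Rg]

end semidirect

section final
variable {n : ℕ}

/-- Images of the generators. -/
def genMap (n : ℕ) : UVBGen n → A (Fin n) ⋊[act (Fin n)] Equiv.Perm (Fin n)
  | Sum.inl i => Sg ⟨i.val, by omega⟩ ⟨i.val + 1, by omega⟩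
  | Sum.inr i => Rg ⟨i.val, by omega⟩ ⟨i.val + 1, by omega⟩

lemma genMap_rels (r : FreeGroup (UVBGen n)) (hr : r ∈ uvbRels n) :
    FreeGroup.lift (genMap n) r = 1 := by
  rcases hr with ⟨i, j, hij, hc⟩ | ⟨i, j, hij, hc⟩ | ⟨i, rfl⟩
  · obtain ⟨h1, h2, h3, h4, h5⟩ := rels3 (a := (⟨i.val, by omega⟩ : Fin n))
      (b := ⟨i.val + 1, by omega⟩) (c := ⟨i.val + 2, by omega⟩) (by simp) (by simp) (by simp)
    have hlt : i.val + 1 < n - 1 := hij ▸ j.isLt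
    obtain rfl : j = ⟨i.val + 1, hlt⟩ := Fin.ext hij
    rcases hc with rfl | rfl | rfl | rfl | rfl <;> rw [map_mul, map_inv, mul_inv_eq_one] <;>
      simp only [map_mul, UVBGen.sg, UVBGen.rg, FreeGroup.lift_apply_of, genMap] <;> assumption
  · obtain ⟨h1, h2, h3⟩ := rels4 (a := (⟨i.val, by omega⟩ : Fin n))
      (b := ⟨i.val + 1, by omega⟩) (c := ⟨j.val, by omega⟩) (d := ⟨j.val + 1, by omega⟩)
      (by rw [Ne, Fin.mk.injEq]; omega) (by rw [Ne, Fin.mk.injEq]; omega)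
      (by rw [Ne, Fin.mk.injEq]; omega) (by rw [Ne, Fin.mk.injEq]; omega)
    rcases hc with rfl | rfl | rfl <;> rw [map_mul, map_inv, mul_inv_eq_one] <;>
      simp only [map_mul, UVBGen.sg, UVBGen.rg, FreeGroup.lift_apply_of, genMap] <;> assumption
  · rw [map_mul, UVBGen.rg, FreeGroup.lift_apply_of]
    exact rels2 _ _

/-- The homomorphism to the semidirect product. -/
def F (n : ℕ) : UVB n →* A (Fin n) ⋊[act (Fin n)] Equiv.Perm (Fin n) :=
  PresentedGroup.toGroup (f := genMap n) genMap_rels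

lemma F_sigma {k : ℕ} (h1 : 1 ≤ k) (h2 : k ≤ n - 1) :
    F n (sigma n k) = Sg ⟨k - 1, by omega⟩ ⟨k, by omega⟩ := by
  obtain ⟨i, rfl⟩ := exists_fin h1 h2
  rw [sigma_eq]
  exact PresentedGroup.toGroup.of (x := Sum.inl i) genMap_rels

lemma F_rho {k : ℕ} (h1 : 1 ≤ k) (h2 : k ≤ n - 1) :
    F n (rho n k) = Rg ⟨k - 1, by omega⟩ ⟨k, by omega⟩ := by
  obtain ⟨i, rfl⟩ := exists_fin h1 h2
  rw [rho_eq]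
  exact PresentedGroup.toGroup.of (x := Sum.inr i) genMap_rels

variable {ι : UVB n →* Equiv.Perm (Fin n)}

lemma F_right (hι : IsIota n ι) : SemidirectProduct.rightHom.comp (F n) = ι := by
  apply PresentedGroup.ext
  rintro (i | i)
  · have e : (PresentedGroup.of (Sum.inl i) : UVB n) = sigma n (i.val + 1) := by
      rw [sigma_eq]; rfl
    rw [e, (hι _ (by omega) (by omega)).1, MonoidHom.comp_apply, F_sigma (by omega) (by omega)]
    rfl
  · have e : (PresentedGroup.of (Sum.inr i) : UVB n) = rho n (i.val + 1) := by
      rw [rho_eq]; rfl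
    rw [e, (hι _ (by omega) (by omega)).2, MonoidHom.comp_apply, F_rho (by omega) (by omega)]
    rfl

lemma F_B (hι : IsIota n ι) {i j : ℕ} (h1 : 1 ≤ i) (hij : i ≤ j) (hj : j ≤ n) :
    F n (B n i j) = SemidirectProduct.inr (ι (B n i j)) := by
  induction j, hij using Nat.le_induction with
  | base => rw [B_self]; simp
  | succ j hij ih =>
    rw [B_succ hij, map_mul, map_mul, map_mul, ih (by omega), F_rho (by omega) (by omega),
      (hι j (by omega) (by omega)).2]
    rfl

lemma iota_B_fix (hι : IsIota n ι) {i j : ℕ} (h1 : 1 ≤ i) (hij : i ≤ j) (hj : j ≤ n)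
    (a : Fin n) (ha : a.val + 2 ≤ i) : ι (B n i j) a = a := by
  induction j, hij using Nat.le_induction with
  | base => rw [B_self]; simp
  | succ j hij ih =>
    rw [B_succ hij, map_mul, Equiv.Perm.mul_apply, ih (by omega), (hι j (by omega) (by omega)).2]
    apply Equiv.swap_apply_of_ne_of_ne <;> (rw [Ne, Fin.ext_iff]; simp; omega)

lemma F_l {i : ℕ} (h1 : 1 ≤ i) (h2 : i < n) :
    F n (l n i) = SemidirectProduct.inl (bas ⟨i - 1, by omega⟩ ⟨i, by omega⟩) := by
  unfold l
  rw [map_mul, map_inv, F_rho h1 (by omega), F_sigma h1 (by omega), mul_inv_eq_iff_eq_mul]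
  refine SemidirectProduct.ext ?_ ?_ <;> simp [Rg, Sg]

lemma inr_conj (π : Equiv.Perm (Fin n)) (a b : Fin n) :
    (SemidirectProduct.inr π * SemidirectProduct.inl (bas a b) * (SemidirectProduct.inr π)⁻¹ :
      A (Fin n) ⋊[act (Fin n)] Equiv.Perm (Fin n)) =
    SemidirectProduct.inl (bas (π a) (π b)) := by
  rw [← act_bas, SemidirectProduct.inl_aut, map_inv]

lemma F_lam (hι : IsIota n ι) (a b : Fin n) (h : a ≠ b) :
    F n (lam n (a.val + 1) (b.val + 1)) = SemidirectProduct.inl (bas a b) := by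
  rcases Nat.lt_or_gt_of_ne (fun hc => h (Fin.ext hc) : a.val ≠ b.val) with hlt | hlt
  · rw [lam_lt (by omega), map_mul, map_mul, map_inv, F_B hι (by omega) (by omega) (by omega),
      F_l (by omega) (by omega), inr_conj, iota_B_fix hι (by omega) (by omega) (by omega) _ (by simp)]
    have := iota_B hι (by omega : 1 ≤ a.val + 1 + 1) (by omega : a.val + 1 + 1 ≤ b.val + 1) (by omega)
    simp only [Nat.add_sub_cancel] at this ⊢
    rw [this]
  · rw [lam_gt (by omega), map_mul, map_mul, map_inv, F_B hι (by omega) (by omega) (by omega),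
      map_mul, map_mul, F_l (by omega) (by omega)]
    nth_rw 2 [← rho_inv]
    rw [map_inv, F_rho (by omega) (by omega)]
    change _ * (SemidirectProduct.inr _ * _ * (SemidirectProduct.inr _)⁻¹) * _ = _
    rw [inr_conj, inr_conj, Equiv.swap_apply_left, Equiv.swap_apply_right,
      iota_B_fix hι (by omega) (by omega) (by omega) ⟨b.val + 1 - 1, _⟩ (by simp)]
    have := iota_B hι (by omega : 1 ≤ b.val + 1 + 1) (by omega : b.val + 1 + 1 ≤ a.val + 1) (by omega)
    simp only [Nat.add_sub_cancel] at this ⊢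
    rw [this]

lemma F_ker (hι : IsIota n ι) (x : ι.ker) : (F n x.1).right = 1 := by
  have h : SemidirectProduct.rightHom.comp (F n) x.1 = 1 := by
    rw [F_right hι]; exact x.2
  exact h

/-- The left component on the kernel. -/
def leftHom (hι : IsIota n ι) : ι.ker →* A (Fin n) where
  toFun x := (F n x.1).left
  map_one' := by simp
  map_mul' x y := by
    simp [F_ker hι x]

/-- Forget the diagonal. -/
def proj (n : ℕ) : A (Fin n) →* Multiplicative (FreeAbelianGroup {p : Fin n × Fin n // p.1 ≠ p.2}) :=
  AddMonoidHom.toMultiplicative (FreeAbelianGroup.lift fun p =>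
    if h : p.1 ≠ p.2 then FreeAbelianGroup.of ⟨p, h⟩ else 0)

lemma proj_bas (p : {p : Fin n × Fin n // p.1 ≠ p.2}) :
    proj n (bas p.1.1 p.1.2) = Multiplicative.ofAdd (FreeAbelianGroup.of p) := by
  change Multiplicative.ofAdd (FreeAbelianGroup.lift _ (FreeAbelianGroup.of _)) = _
  rw [FreeAbelianGroup.lift_apply_of, dif_pos p.2]

lemma card_pairs (n : ℕ) : Nat.card {p : Fin n × Fin n // p.1 ≠ p.2} = n * (n - 1) := by
  have := Finset.offDiag_card (Finset.univ : Finset (Fin n))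
  rw [Nat.card_eq_fintype_card, Fintype.card_subtype]
  rw [show (Finset.univ.filter fun p : Fin n × Fin n => p.1 ≠ p.2) = Finset.univ.offDiag by
    ext; simp, this, Finset.card_univ, Fintype.card_fin, Nat.mul_sub, mul_one]

lemma exists_equiv (hι : IsIota n ι) (c : {p : Fin n × Fin n // p.1 ≠ p.2} → ι.ker)
    (hc : ∀ p, (c p).1 = lam n (p.1.1.val + 1) (p.1.2.val + 1)) :
    ∃ e : Abelianization ↥ι.ker ≃*
        Multiplicative (FreeAbelianGroup {p : Fin n × Fin n // p.1 ≠ p.2}),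
      ∀ p, e (Abelianization.of (c p)) = Multiplicative.ofAdd (FreeAbelianGroup.of p) := by
  let f : Abelianization ι.ker →*
      Multiplicative (FreeAbelianGroup {p : Fin n × Fin n // p.1 ≠ p.2}) :=
    Abelianization.lift ((proj n).comp (leftHom hι))
  let g : Multiplicative (FreeAbelianGroup {p : Fin n × Fin n // p.1 ≠ p.2}) →*
      Abelianization ι.ker :=
    AddMonoidHom.toMultiplicativeLeft
      (FreeAbelianGroup.lift fun p => Additive.ofMul (Abelianization.of (c p)))
  have hg : ∀ p, g (Multiplicative.ofAdd (FreeAbelianGroup.of p)) = Abelianization.of (c p) := by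
    intro p
    change Additive.toMul (FreeAbelianGroup.lift _ (FreeAbelianGroup.of p)) = _
    rw [FreeAbelianGroup.lift_apply_of]
    rfl
  have hf : ∀ p, f (Abelianization.of (c p)) = Multiplicative.ofAdd (FreeAbelianGroup.of p) := by
    intro p
    change Abelianization.lift _ (Abelianization.of _) = _
    rw [Abelianization.lift_apply_of, MonoidHom.comp_apply, ← proj_bas]
    congr 1
    change (F n (c p).1).left = _
    rw [hc, F_lam hι _ _ p.2, SemidirectProduct.left_inl]
  have hfg : ∀ x, f (g x) = x := by
    have : (MonoidHom.toAdditive (f.comp g)) =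
        MonoidHom.toAdditive (MonoidHom.id _) := by
      apply FreeAbelianGroup.lift_ext
      intro p
      change f (g (Multiplicative.ofAdd (FreeAbelianGroup.of p))) = _
      rw [hg, hf]
      rfl
    intro x
    exact DFunLike.congr_fun this (Additive.ofMul x)
  have hL : Lam n ⊆ ι.ker := by
    rintro x ⟨i, j, hi1, hi2, hj1, hj2, hij, rfl⟩
    have := hc ⟨(⟨i - 1, by omega⟩, ⟨j - 1, by omega⟩), by simp; omega⟩
    simp only [Nat.sub_add_cancel hi1, Nat.sub_add_cancel hj1] at this
    rw [← this]
    exact (c _).2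
  have hs : ∀ x ∈ Subgroup.closure (Lam n), ∃ h : x ∈ ι.ker,
      Abelianization.of (⟨x, h⟩ : ι.ker) ∈ g.range := by
    intro x hx
    induction hx using Subgroup.closure_induction with
    | mem x hx =>
      refine ⟨hL hx, ?_⟩
      obtain ⟨i, j, hi1, hi2, hj1, hj2, hij, rfl⟩ := hx
      have := hc ⟨(⟨i - 1, by omega⟩, ⟨j - 1, by omega⟩), by simp; omega⟩
      simp only [Nat.sub_add_cancel hi1, Nat.sub_add_cancel hj1] at this
      refine ⟨_, (hg ⟨(⟨i - 1, by omega⟩, ⟨j - 1, by omega⟩), by simp; omega⟩).trans ?_⟩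
      congr 1
      exact Subtype.ext this
    | one => exact ⟨one_mem _, one_mem g.range⟩
    | mul x y _ _ hx hy =>
      obtain ⟨h1, h2⟩ := hx
      obtain ⟨h3, h4⟩ := hy
      exact ⟨mul_mem h1 h3, mul_mem h2 h4⟩
    | inv x _ hx =>
      obtain ⟨h1, h2⟩ := hx
      exact ⟨inv_mem h1, inv_mem h2⟩
  have hsurj : Function.Surjective g := by
    intro y
    obtain ⟨x, rfl⟩ := QuotientGroup.mk_surjective y
    exact (hs x.1 (ker_le hι hL x.2)).2
  have hgf : ∀ y, g (f y) = y := by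
    intro y
    obtain ⟨x, rfl⟩ := hsurj y
    rw [hfg]
  exact ⟨{ f with invFun := g, left_inv := hgf, right_inv := hfg }, hf⟩

end final
end UVBProof

/-- For `n ≥ 2`, the abelianization `UVP n/[UVP n, UVP n]` is a
free abelian group of rank n(n−1), freely generated by the images of the elements
λ_{i,j}, 1 ≤ i ≠ j ≤ n. -/
theorem statement14 (n : ℕ) (hn : 2 ≤ n)
    (ι : UVB n →* Equiv.Perm (Fin n)) (hι : IsIota n ι)
    (hlam : ∀ (i j : ℕ) (hi1 : 1 ≤ i) (hi2 : i ≤ n) (hj1 : 1 ≤ j) (hj2 : j ≤ n)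
      (hij : i ≠ j), UVB.lam n i j ∈ ι.ker) :
    Nat.card {p : Fin n × Fin n // p.1 ≠ p.2} = n * (n - 1) ∧
    ∃ e : Abelianization ↥ι.ker ≃*
        Multiplicative (FreeAbelianGroup {p : Fin n × Fin n // p.1 ≠ p.2}),
      ∀ p : {p : Fin n × Fin n // p.1 ≠ p.2},
        e (Abelianization.of
            (⟨UVB.lam n (p.1.1.val + 1) (p.1.2.val + 1),
              hlam _ _ (by omega) (by have := p.1.1.isLt; omega)
                (by omega) (by have := p.1.2.isLt; omega) (val_add_one_ne p.2)⟩ : ↥ι.ker)) =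
          Multiplicative.ofAdd (FreeAbelianGroup.of p) := by
  exact ⟨UVBProof.card_pairs n, UVBProof.exists_equiv hι _ fun _ => rfl⟩
end
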